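/- arXiv:2510.05796 — 3 statements merged into one kernel-verified Lean document; each statement's English description precedes it below -/
import Mathlib

section
/- Let Z : LC(ℝ) → ℝ. Then Z is a τ-continuous, translation invariant and dually epi-translation invariant valuation if and only if there exist constants c₀, c₁ ∈ ℝ such that Z(u) = c₀ + c₁·V₁(dom u) for every u ∈ LC(ℝ). -/
open MeasureTheory Filter Topology Pointwise Asymptotics

noncomputable section

variable {E : Type*} [NormedAddCommGroup E] [NormedSpace ℝ E]

/-- The effective domain of an extended-real-valued function. -/
def edom (u : E → EReal) : Set E := {x | u x < ⊤}

/-- `u` has Lipschitz constant `L` on the interior of its domain. -/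
def LipBound (u : E → EReal) (L : ℝ) : Prop :=
  ∀ x ∈ interior (edom u), ∀ y ∈ interior (edom u),
    |(u x).toReal - (u y).toReal| ≤ L * ‖x - y‖

/-- Membership in `LC`: proper, lower semicontinuous, convex, compact domain,
Lipschitz on the interior of the domain. -/
def IsLC (u : E → EReal) : Prop :=
  (∀ x y : E, ∀ t : ℝ, 0 < t → t < 1 →
      u (t • x + (1 - t) • y) ≤ (t : EReal) * u x + ((1 - t : ℝ) : EReal) * u y) ∧
  LowerSemicontinuous u ∧
  (∀ x, u x ≠ ⊥) ∧
  (∃ x, u x ≠ ⊤) ∧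
  IsCompact (edom u) ∧
  (∃ L : ℝ, 0 < L ∧ LipBound u L)

/-- τ-convergence: epi-convergence together with uniformly bounded Lipschitz constants. -/
def TauConv (uk : ℕ → E → EReal) (u : E → EReal) : Prop :=
  (∀ k, IsLC (uk k)) ∧ IsLC u ∧
  (∀ (x : E) (xk : ℕ → E), Tendsto xk atTop (𝓝 x) →
      u x ≤ liminf (fun k => uk k (xk k)) atTop) ∧
  (∀ x : E, ∃ xk : ℕ → E, Tendsto xk atTop (𝓝 x) ∧
      Tendsto (fun k => uk k (xk k)) atTop (𝓝 (u x))) ∧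
  (∃ M : ℝ, 0 < M ∧ ∀ k, LipBound (uk k) M)

/-- Valuation property on `LC`. -/
def IsVal (Z : (E → EReal) → ℝ) : Prop :=
  ∀ u v : E → EReal, IsLC u → IsLC v → IsLC (fun x => min (u x) (v x)) →
    Z (fun x => min (u x) (v x)) + Z (fun x => max (u x) (v x)) = Z u + Z v

/-- τ-upper semicontinuity. -/
def TauUSC (Z : (E → EReal) → ℝ) : Prop :=
  ∀ (uk : ℕ → E → EReal) (u : E → EReal), TauConv uk u →
    limsup (fun k => Z (uk k)) atTop ≤ Z u

/-- τ-continuity. -/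
def TauCont (Z : (E → EReal) → ℝ) : Prop :=
  ∀ (uk : ℕ → E → EReal) (u : E → EReal), TauConv uk u →
    Tendsto (fun k => Z (uk k)) atTop (𝓝 (Z u))

/-- Translation invariance. -/
def TransInv (Z : (E → EReal) → ℝ) : Prop :=
  ∀ u : E → EReal, IsLC u → ∀ y : E, Z (fun x => u (x - y)) = Z u

/-- Dual epi-translation invariance. -/
def DualTransInv (Z : (E → EReal) → ℝ) : Prop :=
  ∀ u : E → EReal, IsLC u → ∀ (l : E →ₗ[ℝ] ℝ) (c : ℝ),
    Z (fun x => u x + ((l x + c : ℝ) : EReal)) = Z u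

/-- SL_n invariance. -/
def SLInv (Z : (E → EReal) → ℝ) : Prop :=
  ∀ u : E → EReal, IsLC u → ∀ φ : E →ₗ[ℝ] E, LinearMap.det φ = 1 →
    Z (fun x => u (φ x)) = Z u

/-- The class `Conc`. -/
def IsConc (ζ : ℝ → ℝ) : Prop :=
  (∀ t ∈ Set.Ici (0 : ℝ), 0 ≤ ζ t) ∧ ConcaveOn ℝ (Set.Ici 0) ζ ∧
  Tendsto ζ (𝓝[>] 0) (𝓝 0) ∧
  Tendsto (fun t => ζ t / t) atTop (𝓝 0)

open Classical in
/-- `(∞-valued) indicator function` of a set. -/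
noncomputable def eIndicator (K : Set E) : E → EReal := fun x =>
  if x ∈ K then (0 : EReal) else ⊤

/-- Real part of an extended-real-valued function. -/
def toRealFn (u : E → EReal) : E → ℝ := fun x => (u x).toReal

open Classical in
/-- Second derivative of `u`, set to `0` where `u` is not twice differentiable. -/
noncomputable def secondDeriv (u : ℝ → EReal) : ℝ → ℝ := fun x =>
  if DifferentiableAt ℝ (toRealFn u) x ∧ DifferentiableAt ℝ (deriv (toRealFn u)) x
  then deriv (deriv (toRealFn u)) x
  else 0

/-
For affine `g` the dual invariance of `Z` gives `Z (g + I_K) = Z (I_K)`. The valuation property lets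
one cut an interval at a point, so the same holds for convex piecewise affine `g`, and, these being
τ-dense, `Z u` depends only on `dom u`. Cutting intervals once more, `t ↦ Z (I_[0, t]) - Z (I_{0})`
is additive and continuous on `ℝ≥0`, hence linear.

Conversely, the length of the domain is a valuation by inclusion-exclusion. It is τ-continuous
because a uniform Lipschitz bound prevents the domains from collapsing in the limit: a point of
`dom u_k` at bounded distance from a point with bounded values has a bounded value itself.
-/

section

open Set
open scoped NNReal

section LipschitzOnWith

variable {α β : Type*} [PseudoEMetricSpace α] {s : Set α} {K L : ℝ≥0}

theorem lipschitzOnWith_congr [PseudoEMetricSpace β] {f g : α → β} (hf : LipschitzOnWith K f s)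
    (h : EqOn f g s) : LipschitzOnWith K g s := fun x hx y hy ↦ by
  rw [← h hx, ← h hy]
  exact hf hx hy

theorem lipschitzOnWith_sup {f g : α → ℝ} (hf : LipschitzOnWith K f s)
    (hg : LipschitzOnWith L g s) : LipschitzOnWith (max K L) (f ⊔ g) s :=
  lipschitzOnWith_iff_restrict.2 (hf.to_restrict.max hg.to_restrict)

end LipschitzOnWith

section Basic

variable {X : Type*}

theorem coe_toRealFn {u : X → EReal} (hbot : ∀ x, u x ≠ ⊥) {x : X} (hx : x ∈ edom u) :
    (toRealFn u x : EReal) = u x :=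
  EReal.coe_toReal (ne_of_lt hx) (hbot x)

theorem eq_top_of_notMem_edom {u : X → EReal} {x : X} (hx : x ∉ edom u) : u x = ⊤ :=
  not_lt_top_iff.1 hx

/-- The extended-real-valued function `g + I_K`, equal to `g` on `K` and to `⊤` off `K`. -/
def addIndicator (g : X → ℝ) (K : Set X) : X → EReal := fun x ↦ g x + eIndicator K x

variable {g : X → ℝ} {K : Set X} {x : X}

theorem addIndicator_of_mem (hx : x ∈ K) : addIndicator g K x = g x := by
  simp [addIndicator, eIndicator, hx]

theorem addIndicator_of_notMem (hx : x ∉ K) : addIndicator g K x = ⊤ := by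
  simp [addIndicator, eIndicator, hx]

theorem edom_addIndicator (g : X → ℝ) (K : Set X) : edom (addIndicator g K) = K := by
  ext x
  by_cases hx : x ∈ K <;>
    simp [edom, addIndicator_of_mem, addIndicator_of_notMem, hx]

theorem toRealFn_addIndicator_eqOn (g : X → ℝ) (K : Set X) :
    EqOn (toRealFn (addIndicator g K)) g K := fun x hx ↦ by
  simp [toRealFn, addIndicator_of_mem hx]

theorem addIndicator_zero (K : Set X) : addIndicator 0 K = eIndicator K := by
  ext x
  simp [addIndicator]

theorem addIndicator_congr {f : X → ℝ} (h : EqOn f g K) : addIndicator f K = addIndicator g K := by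
  ext x
  by_cases hx : x ∈ K
  · rw [addIndicator_of_mem hx, addIndicator_of_mem hx, h hx]
  · rw [addIndicator_of_notMem hx, addIndicator_of_notMem hx]

theorem addIndicator_toRealFn {u : X → EReal} (hbot : ∀ x, u x ≠ ⊥) :
    addIndicator (toRealFn u) (edom u) = u := by
  ext x
  by_cases hx : x ∈ edom u
  · rw [addIndicator_of_mem hx, coe_toRealFn hbot hx]
  · rw [addIndicator_of_notMem hx, eq_top_of_notMem_edom hx]

theorem min_addIndicator (g : X → ℝ) (K L : Set X) :
    (fun x ↦ min (addIndicator g K x) (addIndicator g L x)) = addIndicator g (K ∪ L) := by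
  ext x
  by_cases hK : x ∈ K <;> by_cases hL : x ∈ L <;>
    simp [addIndicator_of_mem, addIndicator_of_notMem, hK, hL]

theorem max_addIndicator (g : X → ℝ) (K L : Set X) :
    (fun x ↦ max (addIndicator g K x) (addIndicator g L x)) = addIndicator g (K ∩ L) := by
  ext x
  by_cases hK : x ∈ K <;> by_cases hL : x ∈ L <;>
    simp [addIndicator_of_mem, addIndicator_of_notMem, hK, hL]

theorem lowerSemicontinuous_addIndicator [TopologicalSpace X] (hK : IsClosed K)
    (hg : ContinuousOn g K) :
    LowerSemicontinuous (addIndicator g K) := by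
  intro x y hy
  by_cases hx : x ∈ K
  · rw [addIndicator_of_mem hx] at hy
    have hlt : ∀ᶠ z in 𝓝[K] x, y < (g z : EReal) :=
      (continuous_coe_real_ereal.continuousAt.tendsto.comp (hg x hx)).eventually
        (lt_mem_nhds hy)
    filter_upwards [eventually_nhdsWithin_iff.1 hlt] with z hz
    by_cases hzK : z ∈ K
    · exact (addIndicator_of_mem hzK).symm ▸ hz hzK
    · exact (addIndicator_of_notMem hzK).symm ▸ hy.trans_le le_top
  · rw [addIndicator_of_notMem hx] at hy
    filter_upwards [hK.isOpen_compl.mem_nhds hx] with z hz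
    rwa [addIndicator_of_notMem hz]

theorem coe_mul_ne_bot {s : ℝ} (hs : 0 < s) {z : EReal} (hz : z ≠ ⊥) : (s : EReal) * z ≠ ⊥ := by
  rw [Ne, EReal.mul_eq_bot]
  simp [hz, hs.le, not_lt_of_ge]

theorem coe_mul_add_coe_mul_eq_coe {u : X → EReal} (hbot : ∀ x, u x ≠ ⊥) {x y : X}
    (hx : x ∈ edom u) (hy : y ∈ edom u) (s t : ℝ) :
    (s : EReal) * u x + (t : EReal) * u y =
      ((s * toRealFn u x + t * toRealFn u y : ℝ) : EReal) := by
  rw [← coe_toRealFn hbot hx, ← coe_toRealFn hbot hy]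
  norm_cast

end Basic

theorem convexOn_toRealFn_iff {u : E → EReal} (hbot : ∀ x, u x ≠ ⊥) :
    ConvexOn ℝ (edom u) (toRealFn u) ↔
      ∀ x y : E, ∀ t : ℝ, 0 < t → t < 1 →
        u (t • x + (1 - t) • y) ≤ (t : EReal) * u x + ((1 - t : ℝ) : EReal) * u y := by
  constructor
  · intro h x y t ht ht'
    by_cases hx : x ∈ edom u
    · by_cases hy : y ∈ edom u
      · rw [coe_mul_add_coe_mul_eq_coe hbot hx hy, ← coe_toRealFn hbot
          (h.1 hx hy ht.le (sub_pos.2 ht').le (add_sub_cancel t 1))]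
        exact_mod_cast h.2 hx hy ht.le (sub_pos.2 ht').le (add_sub_cancel t 1)
      · rw [eq_top_of_notMem_edom hy, EReal.coe_mul_top_of_pos (sub_pos.2 ht'),
          EReal.add_top_of_ne_bot (coe_mul_ne_bot ht (hbot x))]
        exact le_top
    · rw [eq_top_of_notMem_edom hx, EReal.coe_mul_top_of_pos ht,
        EReal.top_add_of_ne_bot (coe_mul_ne_bot (sub_pos.2 ht') (hbot y))]
      exact le_top
  · intro h
    have hle {x y : E} (hx : x ∈ edom u) (hy : y ∈ edom u) {s t : ℝ} (hs : 0 < s) (ht : 0 < t)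
        (hst : s + t = 1) :
        u (s • x + t • y) ≤ ((s * toRealFn u x + t * toRealFn u y : ℝ) : EReal) := by
      obtain rfl : t = 1 - s := by linarith
      exact (h x y s hs (by linarith)).trans_eq (coe_mul_add_coe_mul_eq_coe hbot hx hy s _)
    have hmem {x y : E} (hx : x ∈ edom u) (hy : y ∈ edom u) {s t : ℝ} (hs : 0 < s) (ht : 0 < t)
        (hst : s + t = 1) : s • x + t • y ∈ edom u :=
      (hle hx hy hs ht hst).trans_lt (EReal.coe_lt_top _)
    refine convexOn_iff_forall_pos.2 ⟨convex_iff_forall_pos.2 fun x hx y hy s t ↦ hmem hx hy,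
      fun x hx y hy s t hs ht hst ↦ ?_⟩
    rw [← EReal.coe_le_coe_iff, coe_toRealFn hbot (hmem hx hy hs ht hst)]
    exact hle hx hy hs ht hst

theorem lipBound_iff {F : Type*} [NormedAddCommGroup F] {u : F → EReal} {L : ℝ≥0} :
    LipBound u L ↔ LipschitzOnWith L (toRealFn u) (interior (edom u)) := by
  simp only [LipBound, lipschitzOnWith_iff_dist_le_mul, dist_eq_norm, toRealFn, Real.norm_eq_abs]

theorem isLC_iff {u : E → EReal} :
    IsLC u ↔ ConvexOn ℝ (edom u) (toRealFn u) ∧ LowerSemicontinuous u ∧ (∀ x, u x ≠ ⊥) ∧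
      (edom u).Nonempty ∧ IsCompact (edom u) ∧
      ∃ L : ℝ≥0, LipschitzOnWith L (toRealFn u) (interior (edom u)) := by
  constructor
  · rintro ⟨hconv, hlsc, hbot, ⟨x, hx⟩, hcomp, L, hL, hLip⟩
    lift L to ℝ≥0 using hL.le
    exact ⟨(convexOn_toRealFn_iff hbot).2 hconv, hlsc, hbot, ⟨x, lt_top_iff_ne_top.2 hx⟩, hcomp,
      L, lipBound_iff.1 hLip⟩
  · rintro ⟨hconv, hlsc, hbot, ⟨x, hx⟩, hcomp, L, hLip⟩
    exact ⟨(convexOn_toRealFn_iff hbot).1 hconv, hlsc, hbot, ⟨x, ne_of_lt hx⟩, hcomp,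
      (L + 1 : ℝ≥0), by positivity, lipBound_iff.2 (hLip.weaken le_self_add)⟩

namespace IsLC

variable {u v : E → EReal}

theorem convexOn (hu : IsLC u) : ConvexOn ℝ (edom u) (toRealFn u) :=
  (isLC_iff.1 hu).1

theorem lowerSemicontinuous (hu : IsLC u) : LowerSemicontinuous u := hu.2.1

theorem ne_bot (hu : IsLC u) (x : E) : u x ≠ ⊥ := hu.2.2.1 x

theorem nonempty_edom (hu : IsLC u) : (edom u).Nonempty := (isLC_iff.1 hu).2.2.2.1

theorem isCompact_edom (hu : IsLC u) : IsCompact (edom u) := hu.2.2.2.2.1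

theorem exists_lipschitzOnWith_interior (hu : IsLC u) :
    ∃ L : ℝ≥0, LipschitzOnWith L (toRealFn u) (interior (edom u)) :=
  (isLC_iff.1 hu).2.2.2.2.2

end IsLC

theorem isLC_addIndicator {g : E → ℝ} {K : Set E} {L : ℝ≥0} (hne : K.Nonempty) (hcomp : IsCompact K)
    (hconv : ConvexOn ℝ K g) (hLip : LipschitzOnWith L g K) : IsLC (addIndicator g K) := by
  have heq := toRealFn_addIndicator_eqOn g K
  rw [isLC_iff, edom_addIndicator]
  refine ⟨hconv.congr heq.symm,
    lowerSemicontinuous_addIndicator hcomp.isClosed hLip.continuousOn, fun x ↦ ?_, hne, hcomp, L,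
    lipschitzOnWith_congr (hLip.mono interior_subset) (heq.symm.mono interior_subset)⟩
  by_cases hx : x ∈ K <;> simp [addIndicator_of_mem, addIndicator_of_notMem, hx]

section Operations

variable {X : Type*} {u v : X → EReal}

theorem edom_min (u v : X → EReal) : edom (fun x ↦ min (u x) (v x)) = edom u ∪ edom v := by
  ext x
  exact min_lt_iff (α := EReal)

theorem edom_max (u v : X → EReal) : edom (fun x ↦ max (u x) (v x)) = edom u ∩ edom v := by
  ext x
  exact max_lt_iff (α := EReal)

theorem edom_add_coe (u : X → EReal) (f : X → ℝ) : edom (fun x ↦ u x + (f x : EReal)) = edom u := by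
  ext x
  exact lt_top_iff_ne_top.trans ((EReal.add_ne_top_iff_ne_top_left (EReal.coe_ne_bot _)
    (EReal.coe_ne_top _)).trans lt_top_iff_ne_top.symm)

theorem toRealFn_max_eqOn (hu : ∀ x, u x ≠ ⊥) (hv : ∀ x, v x ≠ ⊥) :
    EqOn (toRealFn fun x ↦ max (u x) (v x)) (toRealFn u ⊔ toRealFn v) (edom u ∩ edom v) := by
  rintro x ⟨hxu, hxv⟩
  rw [← EReal.coe_eq_coe_iff]
  simp only [toRealFn, Pi.sup_apply]
  rw [← coe_toRealFn hu hxu, ← coe_toRealFn hv hxv]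
  norm_cast

theorem toRealFn_add_coe_eqOn (hu : ∀ x, u x ≠ ⊥) (f : X → ℝ) :
    EqOn (toRealFn fun x ↦ u x + (f x : EReal)) (toRealFn u + f) (edom u) := fun x hx ↦ by
  simp [toRealFn, EReal.toReal_add (ne_of_lt hx) (hu x)]

end Operations

namespace IsLC

variable {u v : E → EReal}

theorem nonempty_edom_inter (hu : IsLC u) (hv : IsLC v)
    (hmin : IsLC fun x ↦ min (u x) (v x)) : (edom u ∩ edom v).Nonempty := by
  have hconn : IsPreconnected (edom u ∪ edom v) := by
    rw [← edom_min]
    exact hmin.convexOn.1.isPreconnected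
  obtain ⟨x, -, hx⟩ := isPreconnected_closed_iff.1 hconn _ _ hu.isCompact_edom.isClosed
    hv.isCompact_edom.isClosed subset_rfl
    (by simpa [union_inter_cancel_left] using hu.nonempty_edom)
    (by simpa [union_inter_cancel_right] using hv.nonempty_edom)
  exact ⟨x, hx⟩

protected theorem max (hu : IsLC u) (hv : IsLC v) (hmin : IsLC fun x ↦ min (u x) (v x)) :
    IsLC fun x ↦ max (u x) (v x) := by
  have heq := toRealFn_max_eqOn hu.ne_bot hv.ne_bot
  have hconv : Convex ℝ (edom u ∩ edom v) := hu.convexOn.1.inter hv.convexOn.1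
  obtain ⟨L, hL⟩ := hu.exists_lipschitzOnWith_interior
  obtain ⟨M, hM⟩ := hv.exists_lipschitzOnWith_interior
  rw [isLC_iff, edom_max]
  refine ⟨ConvexOn.congr ((hu.convexOn.subset inter_subset_left hconv).sup
      (hv.convexOn.subset inter_subset_right hconv)) heq.symm,
    hu.lowerSemicontinuous.sup hv.lowerSemicontinuous, fun x ↦ ?_,
    nonempty_edom_inter hu hv hmin, hu.isCompact_edom.inter hv.isCompact_edom,
    max L M, ?_⟩
  · exact (lt_max_of_lt_left (bot_lt_iff_ne_bot.2 (hu.ne_bot x))).ne'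
  · rw [interior_inter]
    exact lipschitzOnWith_congr
      (lipschitzOnWith_sup (hL.mono inter_subset_left) (hM.mono inter_subset_right))
      (heq.symm.mono (inter_subset_inter interior_subset interior_subset))

theorem comp_sub_right (hu : IsLC u) (z : E) : IsLC fun x ↦ u (x - z) := by
  have hedom : edom (fun x ↦ u (x - z)) = Homeomorph.subRight z ⁻¹' edom u := rfl
  obtain ⟨L, hL⟩ := hu.exists_lipschitzOnWith_interior
  rw [isLC_iff, hedom, ← Homeomorph.preimage_interior]
  refine ⟨hu.convexOn.comp_affineMap (AffineMap.id ℝ E - AffineMap.const ℝ E z),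
    hu.lowerSemicontinuous.comp (continuous_sub_right z), fun x ↦ hu.ne_bot _,
    hu.nonempty_edom.preimage (Homeomorph.subRight z).surjective,
    (Homeomorph.subRight z).isCompact_preimage.2 hu.isCompact_edom, L, fun x hx y hy ↦ ?_⟩
  rw [← edist_sub_right x y z]
  exact hL hx hy

theorem add_affine (hu : IsLC u) (l : E →L[ℝ] ℝ) (c : ℝ) :
    IsLC fun x ↦ u x + ((l x + c : ℝ) : EReal) := by
  have heq := toRealFn_add_coe_eqOn hu.ne_bot (fun x ↦ l x + c)
  have hconv : ConvexOn ℝ (edom u) fun x ↦ l x + c :=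
    ((l : E →ₗ[ℝ] ℝ).convexOn hu.convexOn.1).add_const c
  have hcont : Continuous fun x ↦ ((l x + c : ℝ) : EReal) :=
    continuous_coe_real_ereal.comp (by fun_prop)
  obtain ⟨L, hL⟩ := hu.exists_lipschitzOnWith_interior
  have hlLip : LipschitzWith ‖l‖₊ fun x ↦ l x + c := by
    simpa using l.lipschitz.add (LipschitzWith.const c)
  rw [isLC_iff, edom_add_coe]
  refine ⟨(hu.convexOn.add hconv).congr heq.symm,
    hu.lowerSemicontinuous.add' hcont.lowerSemicontinuous fun x ↦
      EReal.continuousAt_add (.inr (EReal.coe_ne_bot _)) (.inr (EReal.coe_ne_top _)),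
    fun x ↦ ?_, hu.nonempty_edom, hu.isCompact_edom, L + ‖l‖₊, ?_⟩
  · simp [EReal.add_eq_bot_iff, hu.ne_bot x]
  · exact lipschitzOnWith_congr (hL.add hlLip.lipschitzOnWith) (heq.symm.mono interior_subset)

end IsLC

theorem IsLC.lipschitzOnWith_edom_of_nonempty_interior {u : E → EReal} (hu : IsLC u)
    (hint : (interior (edom u)).Nonempty) {L : ℝ≥0}
    (hL : LipschitzOnWith L (toRealFn u) (interior (edom u))) :
    LipschitzOnWith L (toRealFn u) (edom u) := by
  -- Contract both points slightly towards an interior point `z`, then remove the contraction in the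
  -- limit; lower semicontinuity suffices since only `u x` has to be bounded from above.
  obtain ⟨z, hz⟩ := hint
  set f := toRealFn u
  refine LipschitzOnWith.of_le_add_mul L fun x hx y hy ↦ ?_
  let segment (w : E) (t : ℝ) : E := (1 - t) • w + t • z
  let bound (t : ℝ) : ℝ := (1 - t) * f y + t * f z + L * ((1 - t) * dist x y)
  have hbound : ∀ t ∈ Ioo (0 : ℝ) 1, u (segment x t) ≤ bound t := by
    rintro t ⟨ht0, ht1⟩
    have hmem (w : E) (hw : w ∈ edom u) : segment w t ∈ interior (edom u) :=
      hu.convexOn.1.combo_self_interior_mem_interior hw hz (by linarith) ht0 (by ring)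
    have hdist : dist (segment x t) (segment y t) = (1 - t) * dist x y := by
      rw [dist_add_right, dist_smul₀, Real.norm_of_nonneg (by linarith)]
    have hconv : f (segment y t) ≤ (1 - t) * f y + t * f z :=
      hu.convexOn.2 hy (interior_subset hz) (by linarith) ht0.le (by ring)
    have hLip := hL.le_add_mul (hmem x hx) (hmem y hy)
    rw [hdist] at hLip
    rw [← coe_toRealFn hu.ne_bot (interior_subset (hmem x hx))]
    exact EReal.coe_le_coe_iff.2 (hLip.trans (by simp only [bound]; linarith))
  have hsegment : Tendsto (segment x) (𝓝[>] 0) (𝓝 x) := by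
    have hcont : Continuous (segment x) := by fun_prop
    exact (hcont.tendsto' 0 x (by simp [segment])).mono_left nhdsWithin_le_nhds
  have hbound_tendsto : Tendsto (fun t ↦ (bound t : EReal)) (𝓝[>] 0)
      (𝓝 ((f y + L * dist x y : ℝ) : EReal)) := by
    have hcont : Continuous fun t ↦ (bound t : EReal) :=
      continuous_coe_real_ereal.comp (by fun_prop)
    exact (hcont.tendsto' 0 _ (by simp [bound])).mono_left nhdsWithin_le_nhds
  rw [← EReal.coe_le_coe_iff, coe_toRealFn hu.ne_bot hx]
  refine le_of_forall_lt fun c hc ↦ ?_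
  obtain ⟨d, hcd, hd⟩ := exists_between hc
  refine hcd.trans_le (ge_of_tendsto hbound_tendsto ?_)
  filter_upwards [hsegment.eventually (hu.lowerSemicontinuous x d hd),
    Ioo_mem_nhdsGT one_pos] with t hdt ht
  exact hdt.le.trans (hbound t ht)

theorem tauConv_addIndicator {gk : ℕ → E → ℝ} {g : E → ℝ} {Kk : ℕ → Set E} {K : Set E} {L : ℝ≥0}
    (hk : ∀ k, IsLC (addIndicator (gk k) (Kk k))) (h : IsLC (addIndicator g K))
    (hLip : ∀ k, LipschitzOnWith L (gk k) (Kk k))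
    (hin : ∀ x ∈ K, ∃ xk : ℕ → E, (∀ k, xk k ∈ Kk k) ∧ Tendsto xk atTop (𝓝 x) ∧
      Tendsto (fun k ↦ gk k (xk k)) atTop (𝓝 (g x)))
    (hout : ∀ x ∉ K, ∀ xk : ℕ → E, Tendsto xk atTop (𝓝 x) → ∀ᶠ k in atTop, xk k ∉ Kk k) :
    TauConv (fun k ↦ addIndicator (gk k) (Kk k)) (addIndicator g K) := by
  refine ⟨hk, h, fun x xk hxk ↦ ?_, fun x ↦ ?_, (L + 1 : ℝ≥0), by positivity, fun k ↦ ?_⟩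
  · by_cases hx : x ∈ K
    · obtain ⟨yk, hyk, hyx, hgy⟩ := hin x hx
      have hlim : Tendsto (fun k ↦ gk k (yk k) - L * dist (xk k) (yk k)) atTop (𝓝 (g x)) := by
        simpa using hgy.sub ((hxk.dist hyx).const_mul (L : ℝ))
      have hle (k : ℕ) : ((gk k (yk k) - L * dist (xk k) (yk k) : ℝ) : EReal) ≤
          addIndicator (gk k) (Kk k) (xk k) := by
        by_cases hxk' : xk k ∈ Kk k
        · rw [addIndicator_of_mem hxk', EReal.coe_le_coe_iff, dist_comm]
          exact sub_le_iff_le_add.2 ((hLip k).le_add_mul (hyk k) hxk')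
        · exact le_top.trans_eq (addIndicator_of_notMem hxk').symm
      rw [addIndicator_of_mem hx,
        ← ((continuous_coe_real_ereal.tendsto _).comp hlim).liminf_eq]
      exact liminf_le_liminf (.of_forall hle)
    · have htop : Tendsto (fun k ↦ addIndicator (gk k) (Kk k) (xk k)) atTop (𝓝 ⊤) :=
        tendsto_const_nhds.congr'
          ((hout x hx xk hxk).mono fun k hk ↦ (addIndicator_of_notMem hk).symm)
      rw [htop.liminf_eq]
      exact le_top
  · by_cases hx : x ∈ K
    · obtain ⟨xk, hmem, hxk, hgx⟩ := hin x hx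
      refine ⟨xk, hxk, ?_⟩
      simp only [addIndicator_of_mem hx, addIndicator_of_mem (hmem _)]
      exact (continuous_coe_real_ereal.tendsto _).comp hgx
    · refine ⟨fun _ ↦ x, tendsto_const_nhds, ?_⟩
      rw [addIndicator_of_notMem hx]
      exact tendsto_const_nhds.congr' ((hout x hx _ tendsto_const_nhds).mono
        fun k hk ↦ (addIndicator_of_notMem hk).symm)
  · rw [lipBound_iff, edom_addIndicator]
    exact lipschitzOnWith_congr (((hLip k).weaken le_self_add).mono interior_subset)
      ((toRealFn_addIndicator_eqOn _ _).symm.mono interior_subset)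

section Interval

variable {u : ℝ → EReal}

theorem IsLC.exists_edom_eq_Icc (hu : IsLC u) : ∃ a b, a ≤ b ∧ edom u = Icc a b := by
  have hconn : IsConnected (edom u) := ⟨hu.nonempty_edom, hu.convexOn.1.isPreconnected⟩
  have hIcc := eq_Icc_of_connected_compact hconn hu.isCompact_edom
  exact ⟨_, _, nonempty_Icc.1 (hIcc ▸ hu.nonempty_edom), hIcc⟩

theorem IsLC.lipschitzOnWith_edom (hu : IsLC u) {L : ℝ≥0}
    (hL : LipschitzOnWith L (toRealFn u) (interior (edom u))) :
    LipschitzOnWith L (toRealFn u) (edom u) := by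
  obtain ⟨a, b, hab, hedom⟩ := hu.exists_edom_eq_Icc
  rcases hab.eq_or_lt with rfl | hab
  · rw [hedom, Icc_self]
    rintro _ rfl _ rfl
    simp
  · refine hu.lipschitzOnWith_edom_of_nonempty_interior ?_ hL
    rwa [hedom, interior_Icc, nonempty_Ioo]

end Interval

namespace TauConv

theorem exists_lipschitzOnWith_edom {uk : ℕ → ℝ → EReal} {u : ℝ → EReal} (h : TauConv uk u) :
    ∃ L : ℝ≥0, ∀ k, LipschitzOnWith L (toRealFn (uk k)) (edom (uk k)) := by
  obtain ⟨hk, -, -, -, L, hL, hLip⟩ := h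
  lift L to ℝ≥0 using hL.le
  exact ⟨L, fun k ↦ (hk k).lipschitzOnWith_edom (lipBound_iff.1 (hLip k))⟩

theorem exists_tendsto_mem_edom {uk : ℕ → E → EReal} {u : E → EReal} (h : TauConv uk u) {x : E}
    (hx : x ∈ edom u) : ∃ xk : ℕ → E, Tendsto xk atTop (𝓝 x) ∧
      (∀ᶠ k in atTop, xk k ∈ edom (uk k)) ∧
      Tendsto (fun k ↦ toRealFn (uk k) (xk k)) atTop (𝓝 (toRealFn u x)) := by
  obtain ⟨-, hu, -, hrec, -⟩ := h
  obtain ⟨xk, hxk, hlim⟩ := hrec x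
  exact ⟨xk, hxk, hlim.eventually (gt_mem_nhds hx),
    (EReal.tendsto_toReal (ne_of_lt hx) (hu.ne_bot x)).comp hlim⟩

theorem eventually_notMem_edom {uk : ℕ → ℝ → EReal} {u : ℝ → EReal} (h : TauConv uk u) {x : ℝ}
    (hx : x ∉ edom u) {xk : ℕ → ℝ} (hxk : Tendsto xk atTop (𝓝 x)) :
    ∀ᶠ k in atTop, xk k ∉ edom (uk k) := by
  -- Otherwise the Lipschitz bound keeps `uk k (xk k)` bounded, although it tends to `u x = ⊤`.
  obtain ⟨L, hLip⟩ := h.exists_lipschitzOnWith_edom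
  obtain ⟨y, hy⟩ := h.2.1.nonempty_edom
  obtain ⟨yk, hyk, hyk_mem, hlim⟩ := h.exists_tendsto_mem_edom hy
  have hbound : Tendsto (fun k ↦ toRealFn (uk k) (yk k) + L * dist (xk k) (yk k)) atTop
      (𝓝 (toRealFn u y + L * dist x y)) := hlim.add ((hxk.dist hyk).const_mul _)
  obtain ⟨B, hB⟩ := exists_gt (toRealFn u y + L * dist x y)
  have hliminf : (B : EReal) < liminf (fun k ↦ uk k (xk k)) atTop :=
    (EReal.coe_lt_top B).trans_le ((eq_top_of_notMem_edom hx).ge.trans (h.2.2.1 x xk hxk))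
  filter_upwards [eventually_lt_of_lt_liminf hliminf, hyk_mem,
    hbound.eventually (gt_mem_nhds hB)] with k hBk hyk hlt hxk
  rw [← coe_toRealFn (h.1 k).ne_bot hxk, EReal.coe_lt_coe_iff] at hBk
  exact (hBk.trans_le ((hLip k).le_add_mul hxk hyk)).not_gt hlt

end TauConv

theorem tendsto_left_endpoint {α ι : Type*} [LinearOrder α] [TopologicalSpace α] [OrderTopology α]
    {f : Filter ι} {ak bk xk : ι → α} {a : α} (hxk : Tendsto xk f (𝓝 a))
    (hle : ∀ᶠ k in f, ak k ≤ xk k) (hge : ∀ᶠ k in f, xk k ≤ bk k)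
    (hout : ∀ c < a, ∀ᶠ k in f, ak k ≤ c → bk k < c) : Tendsto ak f (𝓝 a) := by
  refine tendsto_order.2 ⟨fun c hc ↦ ?_, fun c hc ↦ ?_⟩
  · filter_upwards [hxk.eventually (lt_mem_nhds hc), hge, hout c hc] with k hcx hxb hk
    exact lt_of_not_ge fun hac ↦ (hk hac).not_ge (hcx.le.trans hxb)
  · filter_upwards [hxk.eventually (gt_mem_nhds hc), hle] with k hxc hax
    exact hax.trans_lt hxc

theorem TauConv.tendsto_endpoints {uk : ℕ → ℝ → EReal} {u : ℝ → EReal} (h : TauConv uk u)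
    {ak bk : ℕ → ℝ} {a b : ℝ} (hab : a ≤ b) (hk : ∀ k, edom (uk k) = Icc (ak k) (bk k))
    (hu : edom u = Icc a b) : Tendsto ak atTop (𝓝 a) ∧ Tendsto bk atTop (𝓝 b) := by
  have hin {x : ℝ} (hx : x ∈ Icc a b) : ∃ xk : ℕ → ℝ, Tendsto xk atTop (𝓝 x) ∧
      (∀ᶠ k in atTop, ak k ≤ xk k) ∧ ∀ᶠ k in atTop, xk k ≤ bk k := by
    obtain ⟨xk, hxk, hmem, -⟩ := h.exists_tendsto_mem_edom (hu ▸ hx)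
    simp only [hk] at hmem
    exact ⟨xk, hxk, hmem.mono fun k ↦ And.left, hmem.mono fun k ↦ And.right⟩
  have hout {x : ℝ} (hx : x ∉ Icc a b) : ∀ᶠ k in atTop, x ∉ Icc (ak k) (bk k) := by
    simpa only [hk] using h.eventually_notMem_edom (hu ▸ hx) tendsto_const_nhds
  obtain ⟨xk, hxk, hax, hxb⟩ := hin (left_mem_Icc.2 hab)
  obtain ⟨yk, hyk, hay, hyb⟩ := hin (right_mem_Icc.2 hab)
  exact ⟨tendsto_left_endpoint hxk hax hxb fun c hc ↦
      (hout fun hcI ↦ hc.not_ge hcI.1).mono fun k hck hac ↦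
        lt_of_not_ge fun hcb ↦ hck ⟨hac, hcb⟩,
    tendsto_left_endpoint (α := ℝᵒᵈ) hyk hyb hay fun c hc ↦
      (hout fun hcI ↦ (show b < c from hc).not_ge hcI.2).mono fun k hck hcb ↦
        lt_of_not_ge fun hac ↦ hck ⟨hac, hcb⟩⟩

theorem TauConv.tendsto_volume_edom {uk : ℕ → ℝ → EReal} {u : ℝ → EReal} (h : TauConv uk u) :
    Tendsto (fun k ↦ volume.real (edom (uk k))) atTop (𝓝 (volume.real (edom u))) := by
  choose ak bk hab hk using fun k ↦ (h.1 k).exists_edom_eq_Icc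
  obtain ⟨a, b, hab', hu⟩ := h.2.1.exists_edom_eq_Icc
  obtain ⟨ha, hb⟩ := h.tendsto_endpoints hab' hk hu
  simp only [hk, hu, Real.volume_real_Icc_of_le, hab, hab']
  exact hb.sub ha

section VolumeFunctional

variable {Z : (ℝ → EReal) → ℝ} {c₀ c₁ : ℝ}

theorem isVal_of_eq_volume (hZ : ∀ u, IsLC u → Z u = c₀ + c₁ * volume.real (edom u)) :
    IsVal Z := by
  intro u v hu hv hmin
  rw [hZ _ hmin, hZ _ (hu.max hv hmin), hZ u hu, hZ v hv, edom_min, edom_max]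
  linear_combination c₁ * measureReal_union_add_inter (μ := volume) (s := edom u)
    hv.isCompact_edom.measurableSet hu.isCompact_edom.measure_ne_top
    hv.isCompact_edom.measure_ne_top

theorem tauCont_of_eq_volume (hZ : ∀ u, IsLC u → Z u = c₀ + c₁ * volume.real (edom u)) :
    TauCont Z := by
  intro uk u h
  simp only [hZ u h.2.1, hZ _ (h.1 _)]
  exact (h.tendsto_volume_edom.const_mul c₁).const_add c₀

theorem transInv_of_eq_volume (hZ : ∀ u, IsLC u → Z u = c₀ + c₁ * volume.real (edom u)) :
    TransInv Z := by
  intro u hu y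
  have hvol : volume.real (edom fun x ↦ u (x - y)) = volume.real (edom u) :=
    (measurePreserving_sub_right volume y).measureReal_preimage
      hu.isCompact_edom.measurableSet.nullMeasurableSet
  rw [hZ _ (hu.comp_sub_right y), hZ u hu, hvol]

theorem dualTransInv_of_eq_volume (hZ : ∀ u, IsLC u → Z u = c₀ + c₁ * volume.real (edom u)) :
    DualTransInv Z := by
  intro u hu l c
  exact (hZ _ (hu.add_affine l.toContinuousLinearMap c)).trans (by rw [hZ u hu, edom_add_coe])

end VolumeFunctional

section Secant

/-- The affine function through `(p, g p)` and `(q, g q)`, the building block of piecewise affine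
interpolants. It is the constant `g p` when `p = q`. -/
def secant (g : ℝ → ℝ) (p q : ℝ) : ℝ → ℝ := fun x ↦ g p + slope g p q * (x - p)

theorem secant_left (g : ℝ → ℝ) (p q : ℝ) : secant g p q p = g p := by
  simp [secant]

theorem secant_right (g : ℝ → ℝ) (p q : ℝ) : secant g p q q = g q := by
  have := sub_smul_slope g p q
  simp only [smul_eq_mul, vsub_eq_sub] at this
  rw [secant]
  linarith

theorem secant_eq_linear_add_const (g : ℝ → ℝ) (p q : ℝ) :
    secant g p q = fun x ↦
      (slope g p q • LinearMap.id : ℝ →ₗ[ℝ] ℝ) x + (g p - slope g p q * p) := by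
  ext x
  simp only [secant, LinearMap.smul_apply, LinearMap.id_apply, smul_eq_mul]
  ring

theorem convexOn_secant (g : ℝ → ℝ) (p q : ℝ) : ConvexOn ℝ univ (secant g p q) := by
  rw [secant_eq_linear_add_const]
  exact (LinearMap.convexOn _ convex_univ).add_const _

variable {g f : ℝ → ℝ} {s : Set ℝ} {p q x : ℝ} {L : ℝ≥0}

theorem lipschitzWith_secant (hg : LipschitzOnWith L g s) (hp : p ∈ s) (hq : q ∈ s) :
    LipschitzWith L (secant g p q) := by
  have hslope : |slope g p q| ≤ L := by
    rw [slope_def_field, abs_div, ← Real.dist_eq, ← Real.dist_eq]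
    exact div_le_of_le_mul₀ dist_nonneg L.2 (hg.dist_le_mul q hq p hp)
  refine LipschitzWith.of_dist_le_mul fun x y ↦ ?_
  calc dist (secant g p q x) (secant g p q y) = |slope g p q| * dist x y := by
        rw [Real.dist_eq, Real.dist_eq, ← abs_mul, secant, secant]
        ring_nf
    _ ≤ L * dist x y := by gcongr

theorem secant_le_of_notMem_Ioo (hg : ConvexOn ℝ s g) (hp : p ∈ s) (hq : q ∈ s) (hx : x ∈ s)
    (hpq : p < q) (hxpq : x ∉ Ioo p q) : secant g p q x ≤ g x := by
  have hline : g x = g p + slope g p x * (x - p) := (secant_right g p x).symm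
  rcases lt_trichotomy x p with hxp | rfl | hpx
  · have := hg.slope_mono hp ⟨hx, hxp.ne⟩ ⟨hq, hpq.ne'⟩ (hxp.trans hpq).le
    rw [hline, secant]
    nlinarith
  · exact (secant_left g x q).le
  · have hqx : q ≤ x := not_lt.1 fun h ↦ hxpq ⟨hpx, h⟩
    have := hg.slope_mono hp ⟨hq, hpq.ne'⟩ ⟨hx, hpx.ne'⟩ hqx
    rw [hline, secant]
    nlinarith

theorem le_secant_of_le (hf : ConvexOn ℝ (Icc p q) f) (hp : f p ≤ g p) (hq : f q ≤ g q)
    (hx : x ∈ Icc p q) : f x ≤ secant g p q x := by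
  have hpq : p ≤ q := hx.1.trans hx.2
  obtain ⟨α, β, hα, hβ, hαβ, rfl⟩ := (Convex.mem_Icc hpq).1 hx
  have hslope : slope g p q * (q - p) = g q - g p := by
    linarith [secant_right g p q, show secant g p q q = g p + slope g p q * (q - p) from rfl]
  calc f (α * p + β * q) ≤ α * f p + β * f q :=
        hf.2 (left_mem_Icc.2 hpq) (right_mem_Icc.2 hpq) hα hβ hαβ
    _ ≤ α * g p + β * g q := by gcongr
    _ = secant g p q (α * p + β * q) := by
        obtain rfl : α = 1 - β := by linarith
        rw [secant]
        linear_combination (-β) * hslope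

end Secant

section Interpolant

/-- The convex piecewise affine interpolant of `g` at the nodes `t 0, …, t (n + 1)`, written as the
maximum of the secants over consecutive nodes, which makes its convexity evident. It interpolates
`g` only if `g` is convex and `t` is increasing. -/
def interpolant (g : ℝ → ℝ) (t : ℕ → ℝ) (n : ℕ) : ℝ → ℝ :=
  (Finset.range (n + 1)).sup' Finset.nonempty_range_add_one fun i ↦ secant g (t i) (t (i + 1))

theorem convexOn_interpolant (g : ℝ → ℝ) (t : ℕ → ℝ) (n : ℕ) :
    ConvexOn ℝ univ (interpolant g t n) :=
  Finset.sup'_induction _ _ (fun _ hf _ hg ↦ hf.sup hg) fun _ _ ↦ convexOn_secant _ _ _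

variable {g : ℝ → ℝ} {t : ℕ → ℝ} {n i : ℕ} {s : Set ℝ} {x : ℝ} {L : ℝ≥0}

theorem lipschitzWith_interpolant (hg : LipschitzOnWith L g s) (hs : ∀ i ≤ n + 1, t i ∈ s) :
    LipschitzWith L (interpolant g t n) := by
  refine Finset.sup'_induction _ _ (fun f hf h hh ↦ max_self L ▸ hf.max hh) fun i hi ↦ ?_
  rw [Finset.mem_range] at hi
  exact lipschitzWith_secant hg (hs i (by lia)) (hs (i + 1) (by lia))

theorem interpolant_eq_secant (hg : ConvexOn ℝ s g) (ht : StrictMono t)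
    (hs : ∀ i ≤ n + 1, t i ∈ s) (hi : i ≤ n) (hx : x ∈ Icc (t i) (t (i + 1))) :
    interpolant g t n x = secant g (t i) (t (i + 1)) x := by
  have hnode {j k : ℕ} (hj : j ≤ n) (hk : k ≤ n + 1) :
      secant g (t j) (t (j + 1)) (t k) ≤ g (t k) :=
    secant_le_of_notMem_Ioo hg (hs j (by lia)) (hs (j + 1) (by lia)) (hs k hk)
      (ht j.lt_succ_self) fun h ↦ by
        have := ht.lt_iff_lt.1 h.1
        have := ht.lt_iff_lt.1 h.2
        lia
  rw [interpolant, Finset.sup'_apply]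
  refine le_antisymm (Finset.sup'_le _ _ fun j hj ↦ ?_)
    (Finset.le_sup' (fun j ↦ secant g (t j) (t (j + 1)) x) (Finset.mem_range_succ_iff.2 hi))
  rw [Finset.mem_range_succ_iff] at hj
  exact le_secant_of_le ((convexOn_secant _ _ _).subset (subset_univ _) (convex_Icc _ _))
    (hnode hj (by lia)) (hnode hj (by lia)) hx

theorem interpolant_node (hg : ConvexOn ℝ s g) (ht : StrictMono t) (hs : ∀ i ≤ n + 1, t i ∈ s)
    (hi : i ≤ n + 1) : interpolant g t n (t i) = g (t i) := by
  cases i with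
  | zero =>
    rw [interpolant_eq_secant hg ht hs n.zero_le (left_mem_Icc.2 (ht zero_lt_one).le), secant_left]
  | succ i =>
    rw [interpolant_eq_secant hg ht hs (Nat.le_of_succ_le_succ hi)
      (right_mem_Icc.2 (ht i.lt_succ_self).le), secant_right]

end Interpolant

section UniformNode

/-- The `i`-th node of the uniform partition of `[a, b]` into `n + 1` intervals. -/
def uniformNode (a b : ℝ) (n i : ℕ) : ℝ := AffineMap.lineMap a b ((i : ℝ) / (n + 1))

variable {a b : ℝ} {n i : ℕ}

theorem uniformNode_zero : uniformNode a b n 0 = a := by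
  simp [uniformNode]

theorem uniformNode_last : uniformNode a b n (n + 1) = b := by
  have : ((n : ℝ) + 1) ≠ 0 := by positivity
  simp [uniformNode, this]

theorem strictMono_uniformNode (hab : a < b) : StrictMono (uniformNode a b n) := fun i j hij ↦ by
  have : (i : ℝ) / (n + 1) < j / (n + 1) := by gcongr
  exact (lineMap_lt_lineMap_iff_of_lt this).2 hab

theorem uniformNode_mem_Icc (hab : a < b) (hi : i ≤ n + 1) : uniformNode a b n i ∈ Icc a b := by
  have hmono := (strictMono_uniformNode (n := n) hab).monotone
  exact ⟨uniformNode_zero.ge.trans (hmono i.zero_le), (hmono hi).trans_eq uniformNode_last⟩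

theorem exists_tendsto_uniformNode {x : ℝ} (hx : x ∈ Icc a b) :
    ∃ ik : ℕ → ℕ, (∀ n, ik n ≤ n + 1) ∧
      Tendsto (fun n ↦ uniformNode a b n (ik n)) atTop (𝓝 x) := by
  rw [← segment_eq_Icc (hx.1.trans hx.2), segment_eq_image_lineMap] at hx
  obtain ⟨θ, ⟨hθ0, hθ1⟩, rfl⟩ := hx
  refine ⟨fun n ↦ ⌊θ * (n + 1)⌋₊, fun n ↦ ?_, ?_⟩
  · refine Nat.floor_le_of_le ?_
    push_cast
    exact mul_le_of_le_one_left (by positivity) hθ1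
  · have hfloor : Tendsto (fun n : ℕ ↦ (⌊θ * (n + 1)⌋₊ : ℝ) / (n + 1)) atTop (𝓝 θ) :=
      (tendsto_nat_floor_mul_div_atTop hθ0).comp
        (tendsto_atTop_add_const_right _ 1 tendsto_natCast_atTop_atTop)
    exact ((AffineMap.lineMap_continuous (R := ℝ)).tendsto θ).comp hfloor

end UniformNode

theorem tauConv_interpolant {g : ℝ → ℝ} {a b : ℝ} {L : ℝ≥0} (hab : a < b)
    (hconv : ConvexOn ℝ (Icc a b) g) (hLip : LipschitzOnWith L g (Icc a b)) :
    TauConv (fun n ↦ addIndicator (interpolant g (uniformNode a b n) n) (Icc a b))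
      (addIndicator g (Icc a b)) := by
  have hmem (n : ℕ) : ∀ i ≤ n + 1, uniformNode a b n i ∈ Icc a b :=
    fun i hi ↦ uniformNode_mem_Icc hab hi
  have hne : (Icc a b).Nonempty := nonempty_Icc.2 hab.le
  have hLip' (n : ℕ) : LipschitzOnWith L (interpolant g (uniformNode a b n) n) (Icc a b) :=
    (lipschitzWith_interpolant hLip (hmem n)).lipschitzOnWith
  refine tauConv_addIndicator
    (fun n ↦ isLC_addIndicator hne isCompact_Icc
      ((convexOn_interpolant _ _ _).subset (subset_univ _) (convex_Icc a b)) (hLip' n))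
    (isLC_addIndicator hne isCompact_Icc hconv hLip) hLip' (fun x hx ↦ ?_)
    fun x hx xk hxk ↦ hxk.eventually (isClosed_Icc.isOpen_compl.mem_nhds hx)
  obtain ⟨ik, hik, hlim⟩ := exists_tendsto_uniformNode hx
  have hnode (n : ℕ) := hmem n (ik n) (hik n)
  refine ⟨fun n ↦ uniformNode a b n (ik n), hnode, hlim, ?_⟩
  simp only [interpolant_node hconv (strictMono_uniformNode hab) (hmem _) (hik _)]
  exact (hLip.continuousOn x hx).tendsto.comp
    (tendsto_nhdsWithin_iff.2 ⟨hlim, .of_forall hnode⟩)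

section Functional

theorem IsVal.map_addIndicator_union {Z : (E → EReal) → ℝ} (hZ : IsVal Z) {g : E → ℝ} {K L : Set E}
    (hK : IsLC (addIndicator g K)) (hL : IsLC (addIndicator g L))
    (hKL : IsLC (addIndicator g (K ∪ L))) :
    Z (addIndicator g (K ∪ L)) + Z (addIndicator g (K ∩ L)) =
      Z (addIndicator g K) + Z (addIndicator g L) := by
  rw [← min_addIndicator, ← max_addIndicator]
  exact hZ _ _ hK hL (by rwa [min_addIndicator])

theorem DualTransInv.map_addIndicator_affine {Z : (E → EReal) → ℝ} (hZ : DualTransInv Z) {K : Set E}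
    (hK : IsLC (eIndicator K)) (l : E →ₗ[ℝ] ℝ) (c : ℝ) :
    Z (addIndicator (fun x ↦ l x + c) K) = Z (eIndicator K) := by
  rw [← hZ _ hK l c]
  exact congrArg Z (funext fun x ↦ add_comm _ _)

theorem isLC_eIndicator {K : Set E} (hne : K.Nonempty) (hcomp : IsCompact K) (hconv : Convex ℝ K) :
    IsLC (eIndicator K) := by
  rw [← addIndicator_zero]
  exact isLC_addIndicator hne hcomp (convexOn_const 0 hconv)
    (LipschitzWith.const 0).lipschitzOnWith

theorem DualTransInv.map_addIndicator_singleton {Z : (E → EReal) → ℝ} (hZ : DualTransInv Z)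
    (g : E → ℝ) (x : E) : Z (addIndicator g {x}) = Z (eIndicator {x}) := by
  have heq : EqOn g (fun y ↦ (0 : E →ₗ[ℝ] ℝ) y + g x) {x} := by simp
  rw [addIndicator_congr heq, hZ.map_addIndicator_affine
    (isLC_eIndicator (singleton_nonempty x) isCompact_singleton (convex_singleton x))]

variable {Z : (ℝ → EReal) → ℝ} {g : ℝ → ℝ} {a b c : ℝ} {L : ℝ≥0}

theorem IsVal.map_addIndicator_Icc (hZ : IsVal Z) (hconv : ConvexOn ℝ (Icc a b) g)
    (hLip : LipschitzOnWith L g (Icc a b)) (hac : a ≤ c) (hcb : c ≤ b) :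
    Z (addIndicator g (Icc a b)) + Z (addIndicator g {c}) =
      Z (addIndicator g (Icc a c)) + Z (addIndicator g (Icc c b)) := by
  have hLC {p q : ℝ} (hpq : p ≤ q) (hsub : Icc p q ⊆ Icc a b) : IsLC (addIndicator g (Icc p q)) :=
    isLC_addIndicator (nonempty_Icc.2 hpq) isCompact_Icc
      (hconv.subset hsub (convex_Icc p q)) (hLip.mono hsub)
  rw [← Icc_union_Icc_eq_Icc hac hcb, ← Icc_inter_Icc_eq_singleton hac hcb]
  refine hZ.map_addIndicator_union (hLC hac (Icc_subset_Icc_right hcb))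
    (hLC hcb (Icc_subset_Icc_left hac)) ?_
  rw [Icc_union_Icc_eq_Icc hac hcb]
  exact hLC (hac.trans hcb) subset_rfl

theorem IsVal.map_eIndicator_Icc (hZ : IsVal Z) (hac : a ≤ c) (hcb : c ≤ b) :
    Z (eIndicator (Icc a b)) + Z (eIndicator {c}) =
      Z (eIndicator (Icc a c)) + Z (eIndicator (Icc c b)) := by
  simp only [← addIndicator_zero]
  exact hZ.map_addIndicator_Icc (convexOn_const 0 (convex_Icc a b))
    (LipschitzWith.const 0).lipschitzOnWith hac hcb

theorem map_addIndicator_interpolant (hval : IsVal Z) (hdual : DualTransInv Z) {s : Set ℝ}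
    {t : ℕ → ℝ} {n m : ℕ} (hconv : ConvexOn ℝ s g) (hLip : LipschitzOnWith L g s)
    (ht : StrictMono t) (hs : ∀ i ≤ n + 1, t i ∈ s) (hm : m ≤ n + 1) :
    Z (addIndicator (interpolant g t n) (Icc (t 0) (t m))) = Z (eIndicator (Icc (t 0) (t m))) := by
  induction m with
  | zero => rw [Icc_self, hdual.map_addIndicator_singleton]
  | succ m ih =>
    have h0m : t 0 ≤ t m := ht.monotone m.zero_le
    have hmm : t m ≤ t (m + 1) := ht.monotone m.le_succ
    have hpiece : Z (addIndicator (interpolant g t n) (Icc (t m) (t (m + 1)))) =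
        Z (eIndicator (Icc (t m) (t (m + 1)))) := by
      rw [addIndicator_congr fun x hx ↦
          interpolant_eq_secant hconv ht hs (Nat.le_of_succ_le_succ hm) hx,
        secant_eq_linear_add_const, hdual.map_addIndicator_affine
          (isLC_eIndicator (nonempty_Icc.2 hmm) isCompact_Icc (convex_Icc _ _))]
    have hglue := hval.map_addIndicator_Icc
      ((convexOn_interpolant g t n).subset (subset_univ _) (convex_Icc _ _))
      (lipschitzWith_interpolant hLip hs).lipschitzOnWith h0m hmm
    rw [hdual.map_addIndicator_singleton, ih (m.le_succ.trans hm), hpiece] at hglue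
    linarith [hval.map_eIndicator_Icc h0m hmm]

theorem map_addIndicator_eq_map_eIndicator (hval : IsVal Z) (hcont : TauCont Z)
    (hdual : DualTransInv Z) (hab : a ≤ b) (hconv : ConvexOn ℝ (Icc a b) g)
    (hLip : LipschitzOnWith L g (Icc a b)) :
    Z (addIndicator g (Icc a b)) = Z (eIndicator (Icc a b)) := by
  rcases hab.eq_or_lt with rfl | hab
  · rw [Icc_self, hdual.map_addIndicator_singleton]
  · refine tendsto_nhds_unique (hcont _ _ (tauConv_interpolant hab hconv hLip))
      (tendsto_const_nhds.congr fun n ↦ ?_)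
    have := map_addIndicator_interpolant hval hdual hconv hLip (strictMono_uniformNode hab)
      (fun i hi ↦ uniformNode_mem_Icc hab hi) le_rfl (n := n)
    rwa [uniformNode_zero, uniformNode_last, eq_comm] at this

theorem IsLC.map_eq_map_eIndicator_edom {u : ℝ → EReal} (hu : IsLC u) (hval : IsVal Z)
    (hcont : TauCont Z) (hdual : DualTransInv Z) : Z u = Z (eIndicator (edom u)) := by
  obtain ⟨a, b, hab, hedom⟩ := hu.exists_edom_eq_Icc
  obtain ⟨L, hL⟩ := hu.exists_lipschitzOnWith_interior
  have hLip := hu.lipschitzOnWith_edom hL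
  have hconv := hu.convexOn
  rw [hedom] at hLip hconv
  have := map_addIndicator_eq_map_eIndicator hval hcont hdual hab hconv hLip
  rwa [← hedom, addIndicator_toRealFn hu.ne_bot] at this

theorem TransInv.map_eIndicator_Icc (hZ : TransInv Z) (hab : a ≤ b) :
    Z (eIndicator (Icc a b)) = Z (eIndicator (Icc 0 (b - a))) := by
  rw [← hZ _ (isLC_eIndicator (nonempty_Icc.2 (sub_nonneg.2 hab)) isCompact_Icc (convex_Icc _ _)) a]
  congr 1
  ext x
  simp [eIndicator]

end Functional

section Cauchy

theorem tauConv_eIndicator_Icc {ak bk : ℕ → ℝ} {a b : ℝ} (ha : Tendsto ak atTop (𝓝 a))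
    (hb : Tendsto bk atTop (𝓝 b)) (hk : ∀ k, ak k ≤ bk k) :
    TauConv (fun k ↦ eIndicator (Icc (ak k) (bk k))) (eIndicator (Icc a b)) := by
  have hLC {p q : ℝ} (hpq : p ≤ q) : IsLC (addIndicator 0 (Icc p q)) := by
    rw [addIndicator_zero]
    exact isLC_eIndicator (nonempty_Icc.2 hpq) isCompact_Icc (convex_Icc p q)
  simp only [← addIndicator_zero]
  refine tauConv_addIndicator (L := 0) (fun k ↦ hLC (hk k))
    (hLC (le_of_tendsto_of_tendsto' ha hb hk))
    (fun k ↦ (LipschitzWith.const 0).lipschitzOnWith) (fun x hx ↦ ?_) fun x hx xk hxk ↦ ?_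
  · refine ⟨fun k ↦ max (ak k) (min x (bk k)),
      fun k ↦ ⟨le_max_left _ _, max_le (hk k) (min_le_right _ _)⟩, ?_, tendsto_const_nhds⟩
    have := ha.max ((tendsto_const_nhds (x := x)).min hb)
    rwa [min_eq_left hx.2, max_eq_right hx.1] at this
  · rcases not_and_or.1 hx with hxa | hbx
    · exact (hxk.eventually_lt ha (not_le.1 hxa)).mono fun k h hmem ↦ h.not_ge hmem.1
    · exact (hb.eventually_lt hxk (not_le.1 hbx)).mono fun k h hmem ↦ h.not_ge hmem.2

theorem map_nnreal_eq_mul (f : ℝ≥0 →+ ℝ) (hf : Continuous f) (t : ℝ≥0) : f t = f 1 * t := by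
  -- `map_real_smul` needs a real vector space as domain, so extend `f` to `ℝ` as an odd function.
  let F : ℝ →+ ℝ := AddMonoidHom.mk' (fun x ↦ f x.toNNReal - f (-x).toNNReal) fun x y ↦ by
    have hparts : (x + y).toNNReal + (-x).toNNReal + (-y).toNNReal =
        (-(x + y)).toNNReal + x.toNNReal + y.toNNReal := by
      ext
      push_cast [Real.coe_toNNReal']
      linarith [max_zero_sub_max_neg_zero_eq_self x, max_zero_sub_max_neg_zero_eq_self y,
        max_zero_sub_max_neg_zero_eq_self (x + y)]
    have := congrArg f hparts
    simp only [map_add] at this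
    linarith
  have hF : Continuous F := by
    change Continuous fun x : ℝ ↦ f x.toNNReal - f (-x).toNNReal
    fun_prop
  have hFcoe (s : ℝ≥0) : F s = f s := by
    have : (-(s : ℝ)).toNNReal = 0 := Real.toNNReal_of_nonpos (neg_nonpos.2 s.coe_nonneg)
    simp [F, this]
  have := map_real_smul F hF t 1
  rw [smul_eq_mul, smul_eq_mul, mul_one, hFcoe] at this
  rw [this, mul_comm, ← hFcoe 1, NNReal.coe_one]

theorem exists_map_eIndicator_Icc {Z : (ℝ → EReal) → ℝ} (hval : IsVal Z) (hcont : TauCont Z)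
    (htrans : TransInv Z) : ∃ c₀ c₁ : ℝ, ∀ a b : ℝ, a ≤ b →
      Z (eIndicator (Icc a b)) = c₀ + c₁ * (b - a) := by
  let f : ℝ≥0 →+ ℝ :=
    { toFun t := Z (eIndicator (Icc 0 (t : ℝ))) - Z (eIndicator {0})
      map_zero' := by simp
      map_add' s t := by
        have hs : (s : ℝ) ≤ s + t := le_add_of_nonneg_right t.coe_nonneg
        have hglue := hval.map_eIndicator_Icc s.coe_nonneg hs
        rw [htrans.map_eIndicator_Icc hs, ← Icc_self, htrans.map_eIndicator_Icc le_rfl, sub_self,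
          add_sub_cancel_left, Icc_self] at hglue
        push_cast
        linarith }
  have hf : Continuous f := continuous_iff_seqContinuous.2 fun tk t ht ↦
    (hcont _ _ (tauConv_eIndicator_Icc tendsto_const_nhds (NNReal.tendsto_coe.2 ht)
      fun k ↦ (tk k).2)).sub_const _
  refine ⟨Z (eIndicator {0}), f 1, fun a b hab ↦ ?_⟩
  lift b - a to ℝ≥0 using sub_nonneg.2 hab with t ht
  have hlin : Z (eIndicator (Icc 0 (t : ℝ))) - Z (eIndicator {0}) = f 1 * t :=
    map_nnreal_eq_mul f hf t
  rw [htrans.map_eIndicator_Icc hab, ← ht]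
  linarith

end Cauchy

end

/-- A functional `Z : LC(ℝ) → ℝ` is a τ-continuous, translation invariant and
dually epi-translation invariant valuation if and only if there exist constants `c₀, c₁ ∈ ℝ`
such that `Z u = c₀ + c₁ ⬝ V₁(dom u)` for every `u ∈ LC(ℝ)`. -/
theorem stmt1 (Z : (ℝ → EReal) → ℝ) :
    (IsVal Z ∧ TauCont Z ∧ TransInv Z ∧ DualTransInv Z) ↔
    ∃ c₀ c₁ : ℝ, ∀ u : ℝ → EReal, IsLC u →
      Z u = c₀ + c₁ * (volume (edom u)).toReal := by
  constructor
  · rintro ⟨hval, hcont, htrans, hdual⟩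
    obtain ⟨c₀, c₁, hIcc⟩ := exists_map_eIndicator_Icc hval hcont htrans
    refine ⟨c₀, c₁, fun u hu ↦ ?_⟩
    obtain ⟨a, b, hab, hedom⟩ := hu.exists_edom_eq_Icc
    rw [hu.map_eq_map_eIndicator_edom hval hcont hdual, hedom, hIcc a b hab, Real.volume_Icc,
      ENNReal.toReal_ofReal (sub_nonneg.2 hab)]
  · rintro ⟨c₀, c₁, hZ⟩
    exact ⟨isVal_of_eq_volume hZ, tauCont_of_eq_volume hZ, transInv_of_eq_volume hZ,
      dualTransInv_of_eq_volume hZ⟩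

end
end

section
/- The functional Z : LC(ℝⁿ) → ℝ defined by Z(u) = V_n(dom u) is τ-continuous: if a sequence u_k in LC(ℝⁿ) τ-converges to u ∈ LC(ℝⁿ), then V_n(dom u_k) → V_n(dom u) as k → +∞. -/
open MeasureTheory Filter Topology Pointwise Asymptotics

noncomputable section

variable {E : Type*} [NormedAddCommGroup E] [NormedSpace ℝ E]

/-!
The domains of `u_k` are compared with that of `u` through Painlevé–Kuratowski limits of sets.
Recovery sequences put `dom u` inside the lower limit of `dom u_k`. Conversely, the uniform
Lipschitz bound, started at a recovery sequence of one point of `dom u`, bounds `u_k` locally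
uniformly on the interior of `dom u_k`, so the upper limit of these interiors cannot contain a point
where `u = +∞`.

For convex sets in finite dimension this is enough for the volumes to converge. By separation, an
interior point of the lower limit is eventually interior to each set. A connected set that enters a
ball but misses its boundary sphere stays in the ball, so the interiors are uniformly bounded. As
boundaries of convex sets are null, dominated convergence applies to the indicator functions.
-/

section KuratowskiLimits

variable {ι X : Type*}

/-- The lower Painlevé–Kuratowski limit of the sets `K i` along `l`: the points all of whose
neighbourhoods eventually meet `K i`. This is not the set-theoretic `Filter.liminf`. -/
def kuratowskiLiminf [TopologicalSpace X] (K : ι → Set X) (l : Filter ι) : Set X :=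
  {x | ∀ U ∈ 𝓝 x, ∀ᶠ i in l, (K i ∩ U).Nonempty}

/-- The upper Painlevé–Kuratowski limit of the sets `K i` along `l`: the points all of whose
neighbourhoods frequently meet `K i`. This is not the set-theoretic `Filter.limsup`. -/
def kuratowskiLimsup [TopologicalSpace X] (K : ι → Set X) (l : Filter ι) : Set X :=
  {x | ∀ U ∈ 𝓝 x, ∃ᶠ i in l, (K i ∩ U).Nonempty}

theorem mem_kuratowskiLimsup_iff_frequently_prod [TopologicalSpace X] {K : ι → Set X}
    {l : Filter ι} {x : X} :
    x ∈ kuratowskiLimsup K l ↔ ∃ᶠ p in l ×ˢ 𝓝 x, p.2 ∈ K p.1 := by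
  constructor
  · intro hx hnot
    obtain ⟨s, hs, U, hU, hsU⟩ := mem_prod_iff.1 hnot
    obtain ⟨i, ⟨y, hyK, hyU⟩, his⟩ := ((hx U hU).and_eventually hs).exists
    exact hsU (Set.mk_mem_prod his hyU) hyK
  · intro hx U hU hnot
    refine hx ?_
    filter_upwards [prod_mem_prod hnot hU] with p ⟨hp, hpU⟩ hpK
    exact hp ⟨p.2, hpK, hpU⟩

theorem eventually_disjoint_of_disjoint_kuratowskiLimsup [TopologicalSpace X] {K : ι → Set X}
    {l : Filter ι} {C : Set X} (hC : IsCompact C) (hCK : Disjoint C (kuratowskiLimsup K l)) :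
    ∀ᶠ i in l, Disjoint C (K i) := by
  have hloc : ∀ x ∈ C, ∀ᶠ p in l ×ˢ 𝓝 x, p.2 ∉ K p.1 := fun x hx => by
    simpa only [mem_kuratowskiLimsup_iff_frequently_prod, not_frequently] using
      Set.disjoint_left.1 hCK hx
  have hnear : ∀ᶠ p in l ×ˢ 𝓝ˢ C, p.2 ∉ K p.1 := hC.mem_prod_nhdsSet_of_forall hloc
  filter_upwards [hnear.curry] with i hi
  exact Set.disjoint_left.2 hi.self_of_nhdsSet

theorem eventually_subset_thickening_of_subset_kuratowskiLiminf [PseudoMetricSpace X]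
    {K : ι → Set X} {l : Filter ι} {C : Set X} (hC : IsCompact C)
    (hCK : C ⊆ kuratowskiLiminf K l) {ε : ℝ} (hε : 0 < ε) :
    ∀ᶠ i in l, C ⊆ Metric.thickening ε (K i) := by
  have hloc : ∀ x ∈ C, ∀ᶠ p in l ×ˢ 𝓝 x, p.2 ∈ Metric.thickening ε (K p.1) := fun x hx => by
    have hball : Metric.ball x (ε / 2) ∈ 𝓝 x := Metric.ball_mem_nhds x (half_pos hε)
    filter_upwards [prod_mem_prod (hCK hx _ hball) hball] with p ⟨⟨y, hyK, hy⟩, hp⟩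
    refine Metric.mem_thickening_iff.2 ⟨y, hyK, ?_⟩
    have htri := dist_triangle_right p.2 y x
    rw [Metric.mem_ball] at hy hp
    linarith
  have hnear : ∀ᶠ p in l ×ˢ 𝓝ˢ C, p.2 ∈ Metric.thickening ε (K p.1) :=
    hC.mem_prod_nhdsSet_of_forall hloc
  filter_upwards [hnear.curry] with i hi
  exact hi.self_of_nhdsSet

end KuratowskiLimits

section ConvexSets

theorem opNorm_mul_le_of_forall_norm_lt {f : E →L[ℝ] ℝ} {δ c : ℝ} (hδ : 0 < δ)
    (h : ∀ e : E, ‖e‖ < δ → f e ≤ c) : ‖f‖ * δ ≤ c := by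
  by_contra! hlt
  obtain ⟨e, he, hfe⟩ := f.exists_lt_apply_of_lt_opNorm ((div_lt_iff₀ hδ).2 hlt)
  have hδe : ‖δ • e‖ < δ := by
    rw [norm_smul, Real.norm_of_nonneg hδ.le]
    exact mul_lt_of_lt_one_right hδ he
  have habs : |f (δ • e)| ≤ c :=
    abs_le'.2 ⟨h _ hδe, map_neg f (δ • e) ▸ h _ (by rwa [norm_neg])⟩
  rw [map_smul, smul_eq_mul, abs_mul, abs_of_pos hδ, mul_comm, ← Real.norm_eq_abs] at habs
  exact habs.not_gt ((div_lt_iff₀ hδ).1 hfe)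

theorem ball_sub_subset_closure_of_ball_subset_thickening {K : Set E} (hK : Convex ℝ K) {x : E}
    {r ε : ℝ} (hε : 0 < ε) (h : Metric.ball x r ⊆ Metric.thickening ε K) :
    Metric.ball x (r - ε) ⊆ closure K := by
  intro y hy
  by_contra hyK
  obtain ⟨f, s, hfK, hfy⟩ := geometric_hahn_banach_closed_point hK.closure isClosed_closure hyK
  have hεδ : ε < r - dist y x := by linarith [Metric.mem_ball.1 hy]
  have hf_le : ∀ e : E, ‖e‖ < r - dist y x → f e ≤ ‖f‖ * ε + (s - f y) := by
    intro e he
    have hmem : y + e ∈ Metric.ball x r := by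
      have htri := dist_triangle (y + e) y x
      rw [dist_self_add_left] at htri
      rw [Metric.mem_ball]
      linarith
    obtain ⟨k, hkK, hk⟩ := Metric.mem_thickening_iff.1 (h hmem)
    rw [dist_eq_norm] at hk
    have hle : f (y + e - k) ≤ ‖f‖ * ε := (le_abs_self _).trans (f.le_opNorm_of_le hk.le)
    rw [map_sub, map_add] at hle
    linarith [hfK k (subset_closure hkK)]
  have hnorm := opNorm_mul_le_of_forall_norm_lt (hε.trans hεδ) hf_le
  linarith [mul_le_mul_of_nonneg_left hεδ.le (norm_nonneg f)]

variable [FiniteDimensional ℝ E]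

theorem interior_closure_eq_interior_of_convex {K : Set E} (hK : Convex ℝ K) :
    interior (closure K) = interior K := by
  rcases (interior (closure K)).eq_empty_or_nonempty with hempty | hne
  · rw [hempty, Set.subset_eq_empty (interior_mono subset_closure) hempty]
  · refine hK.interior_closure_eq_interior_of_nonempty_interior ?_
    rw [hK.closure.interior_nonempty_iff_affineSpan_eq_top] at hne
    rw [hK.interior_nonempty_iff_affineSpan_eq_top, ← top_le_iff, ← hne]
    exact affineSpan_le.2 <| closure_minimal (subset_affineSpan ℝ K)
      (AffineSubspace.closed_of_finiteDimensional _)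

variable {ι : Type*} {K : ι → Set E} {l : Filter ι}

theorem eventually_mem_interior_of_mem_interior_kuratowskiLiminf (hK : ∀ i, Convex ℝ (K i))
    {x : E} (hx : x ∈ interior (kuratowskiLiminf K l)) : ∀ᶠ i in l, x ∈ interior (K i) := by
  obtain ⟨r, hr, hball⟩ := Metric.nhds_basis_closedBall.mem_iff.1 (mem_interior_iff_mem_nhds.1 hx)
  filter_upwards [eventually_subset_thickening_of_subset_kuratowskiLiminf
    (isCompact_closedBall x r) hball (half_pos hr)] with i hi
  rw [← interior_closure_eq_interior_of_convex (hK i)]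
  have hsub := ball_sub_subset_closure_of_ball_subset_thickening (hK i) (half_pos hr)
    (Metric.ball_subset_closedBall.trans hi)
  exact mem_interior.2 ⟨_, hsub, Metric.isOpen_ball, Metric.mem_ball_self (by linarith)⟩

theorem eventually_interior_subset_ball (hK : ∀ i, Convex ℝ (K i)) {x : E}
    (hx : x ∈ kuratowskiLiminf K l) {R : ℝ} (hR : 0 < R)
    (hsphere : Disjoint (Metric.sphere x R) (kuratowskiLimsup (fun i => interior (K i)) l)) :
    ∀ᶠ i in l, interior (K i) ⊆ Metric.ball x R := by
  filter_upwards [hx _ (Metric.ball_mem_nhds x hR),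
    eventually_disjoint_of_disjoint_kuratowskiLimsup (isCompact_sphere x R) hsphere]
    with i hmeets hmisses
  rcases (interior (K i)).eq_empty_or_nonempty with hempty | hne
  · exact hempty ▸ Set.empty_subset _
  · have hmeets_interior : (interior (K i) ∩ Metric.ball x R).Nonempty := by
      obtain ⟨y, hyK, hy⟩ := hmeets
      rw [← closure_inter_open_nonempty_iff Metric.isOpen_ball,
        (hK i).closure_interior_eq_closure_of_nonempty_interior hne]
      exact ⟨y, subset_closure hyK, hy⟩
    refine (hK i).interior.isPreconnected.subset_of_closure_inter_subset Metric.isOpen_ball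
      hmeets_interior ?_
    rintro y ⟨hy, hyK⟩
    have hyR : dist y x ≤ R := Metric.closure_ball_subset_closedBall hy
    exact hyR.lt_of_ne fun hyS => Set.disjoint_left.1 hmisses hyS hyK

theorem tendsto_measure_of_subset_kuratowskiLiminf [MeasurableSpace E] [BorelSpace E]
    (μ : Measure E) [μ.IsAddHaarMeasure] [l.IsCountablyGenerated] (hK : ∀ i, Convex ℝ (K i))
    {A : Set E} (hA : Convex ℝ A) (hne : A.Nonempty) (hbdd : Bornology.IsBounded A)
    (hinf : A ⊆ kuratowskiLiminf K l)
    (hsup : kuratowskiLimsup (fun i => interior (K i)) l ⊆ closure A) :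
    Tendsto (fun i => μ (K i)) l (𝓝 (μ A)) := by
  obtain ⟨x₀, hx₀⟩ := hne
  obtain ⟨R, hR, hAR⟩ := hbdd.closure.subset_ball_lt 0 x₀
  have hsphere : Disjoint (Metric.sphere x₀ R) (kuratowskiLimsup (fun i => interior (K i)) l) :=
    Metric.sphere_disjoint_ball.mono_right (hsup.trans hAR)
  have hbound := eventually_interior_subset_ball hK (hinf hx₀) hR hsphere
  have hindicator : ∀ᵐ x ∂μ, ∀ᶠ i in l, x ∈ interior (K i) ↔ x ∈ interior A := by
    filter_upwards [measure_eq_zero_iff_ae_notMem.1 (hA.addHaar_frontier μ)] with x hx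
    by_cases hxA : x ∈ interior A
    · filter_upwards [eventually_mem_interior_of_mem_interior_kuratowskiLiminf hK
        (interior_mono hinf hxA)] with i hi
      exact iff_of_true hi hxA
    · have hx_sup : x ∉ kuratowskiLimsup (fun i => interior (K i)) l :=
        fun hmem => hx ⟨hsup hmem, hxA⟩
      filter_upwards [eventually_disjoint_of_disjoint_kuratowskiLimsup isCompact_singleton
        (Set.disjoint_singleton_left.2 hx_sup)] with i hi
      exact iff_of_false (Set.disjoint_singleton_left.1 hi) hxA
  have hinterior : Tendsto (fun i => μ (interior (K i))) l (𝓝 (μ (interior A))) :=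
    tendsto_measure_of_ae_tendsto_indicator l isOpen_interior.measurableSet
      (fun _ => isOpen_interior.measurableSet) measurableSet_ball measure_ball_lt_top.ne hbound
      hindicator
  simpa only [measure_interior_of_null_frontier (hA.addHaar_frontier μ),
    measure_interior_of_null_frontier ((hK _).addHaar_frontier μ)] using hinterior

end ConvexSets

section LipschitzConvex

theorem le_add_mul_dist_of_lipschitzOnWith_interior {s : Set E} {f : E → ℝ}
    (hf : ConvexOn ℝ s f) {C : NNReal} (hC : LipschitzOnWith C f (interior s)) {x z : E}
    (hz : z ∈ interior s) (hx : x ∈ s) : f z ≤ f x + C * dist z x := by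
  have hmid : midpoint ℝ z x ∈ interior s :=
    hf.1.openSegment_interior_self_subset_interior hz hx (midpoint_mem_openSegment z x)
  have hmid_eq : midpoint ℝ z x = (1 / 2 : ℝ) • z + (1 / 2 : ℝ) • x := by
    rw [midpoint_eq_smul_add, smul_add, invOf_eq_inv, one_div]
  have hconv : f (midpoint ℝ z x) ≤ 1 / 2 * f z + 1 / 2 * f x :=
    hmid_eq ▸ hf.2 (interior_subset hz) hx one_half_pos.le one_half_pos.le (add_halves 1)
  have hlip : f z ≤ f (midpoint ℝ z x) + C * (1 / 2 * dist z x) := by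
    have h := hC.le_add_mul hz hmid
    rwa [dist_left_midpoint, Real.norm_ofNat, ← one_div] at h
  linarith

theorem LipBound.lipschitzOnWith {F : Type*} [NormedAddCommGroup F] {u : F → EReal} {L : ℝ}
    (h : LipBound u L) : LipschitzOnWith L.toNNReal (toRealFn u) (interior (edom u)) := by
  refine LipschitzOnWith.of_dist_le_mul fun x hx y hy => ?_
  rw [Real.dist_eq, dist_eq_norm]
  exact (h x hx y hy).trans (by gcongr; exact Real.le_coe_toNNReal L)

end LipschitzConvex

section EpiConvergence

theorem le_coe_iff_mem_edom_and_toRealFn_le {X : Type*} {u : X → EReal} {x : X} (hx : u x ≠ ⊥)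
    {c : ℝ} : u x ≤ c ↔ x ∈ edom u ∧ toRealFn u x ≤ c := by
  constructor
  · intro hle
    exact ⟨hle.trans_lt (EReal.coe_lt_top c), EReal.toReal_le_toReal hle hx (EReal.coe_ne_top c)⟩
  · rintro ⟨hdom, hle⟩
    rw [← EReal.coe_toReal (ne_of_lt hdom) hx]
    exact EReal.coe_le_coe_iff.2 hle

theorem tendsto_extend_const_cofinite {α β X : Type*} [TopologicalSpace X] {φ : α → β}
    (hφ : Function.Injective φ) {z : α → X} {x : X} (hz : Tendsto z cofinite (𝓝 x)) :
    Tendsto (Function.extend φ z fun _ => x) cofinite (𝓝 x) := by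
  intro U hU
  have hfin : (z ⁻¹' U)ᶜ.Finite := hz hU
  refine (hfin.image φ).subset fun b hb => ?_
  by_cases hφb : ∃ a, φ a = b
  · obtain ⟨a, rfl⟩ := hφb
    refine Set.mem_image_of_mem φ fun ha => hb ?_
    rwa [Set.mem_preimage, hφ.extend_apply]
  · refine absurd ?_ hb
    rw [Set.mem_preimage, Function.extend_apply' _ _ _ hφb]
    exact mem_of_mem_nhds hU

/-- Epi-convergence (`Γ`-convergence) of extended-real-valued functions, in its sequential form. -/
structure EpiConv {X : Type*} [TopologicalSpace X] (uk : ℕ → X → EReal) (u : X → EReal) :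
    Prop where
  le_liminf : ∀ (x : X) (xk : ℕ → X), Tendsto xk atTop (𝓝 x) →
    u x ≤ liminf (fun k => uk k (xk k)) atTop
  exists_tendsto : ∀ x : X, ∃ xk : ℕ → X, Tendsto xk atTop (𝓝 x) ∧
    Tendsto (fun k => uk k (xk k)) atTop (𝓝 (u x))

namespace EpiConv

section Topological

variable {X : Type*} [TopologicalSpace X] {uk : ℕ → X → EReal} {u : X → EReal}

theorem eventually_prod_lt [FirstCountableTopology X] (h : EpiConv uk u) {x : X} {c : EReal}
    (hc : c < u x) : ∀ᶠ p in atTop ×ˢ 𝓝 x, c < uk p.1 p.2 := by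
  by_contra hnot
  obtain ⟨p, hp, hpc⟩ := exists_seq_forall_of_frequently (not_eventually.1 hnot)
  obtain ⟨ψ, hψ, hφ⟩ := strictMono_subseq_of_tendsto_atTop hp.fst
  set φ : ℕ → ℕ := fun j => (p (ψ j)).1
  set y : ℕ → X := Function.extend φ (fun j => (p (ψ j)).2) fun _ => x
  have hy : Tendsto y atTop (𝓝 x) := by
    have hz : Tendsto (fun j => (p (ψ j)).2) atTop (𝓝 x) := hp.snd.comp hψ.tendsto_atTop
    rw [← Nat.cofinite_eq_atTop] at hz ⊢
    exact tendsto_extend_const_cofinite hφ.injective hz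
  have hlt : ∀ᶠ k in atTop, c < uk k (y k) :=
    eventually_lt_of_lt_liminf (hc.trans_le (h.le_liminf x y hy))
  obtain ⟨j, hj⟩ := (hφ.tendsto_atTop.eventually hlt).exists
  have hyj : y (φ j) = (p (ψ j)).2 := hφ.injective.extend_apply _ _ j
  exact hpc (ψ j) (hyj ▸ hj)

theorem lt_top_of_frequently_le [FirstCountableTopology X] (h : EpiConv uk u) {x : X} {c : ℝ}
    (hc : ∃ᶠ p in atTop ×ˢ 𝓝 x, uk p.1 p.2 ≤ c) : u x < ⊤ := by
  refine lt_top_iff_ne_top.2 fun htop => ?_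
  obtain ⟨p, hle, hlt⟩ := (hc.and_eventually
    (h.eventually_prod_lt (htop ▸ EReal.coe_lt_top c))).exists
  exact hle.not_gt hlt

theorem exists_tendsto_eventually_le (h : EpiConv uk u) {x : X} (hx : u x < ⊤) :
    ∃ (c : ℝ) (xk : ℕ → X), Tendsto xk atTop (𝓝 x) ∧ ∀ᶠ k in atTop, uk k (xk k) ≤ c := by
  obtain ⟨xk, hxk, huk⟩ := h.exists_tendsto x
  obtain ⟨c, hc, -⟩ := EReal.lt_iff_exists_real_btwn.1 hx
  exact ⟨c, xk, hxk, huk.eventually_le_const hc⟩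

theorem edom_subset_kuratowskiLiminf (h : EpiConv uk u) :
    edom u ⊆ kuratowskiLiminf (fun k => edom (uk k)) atTop := by
  intro x hx U hU
  obtain ⟨c, xk, hxk, hle⟩ := h.exists_tendsto_eventually_le hx
  filter_upwards [hle, hxk hU] with k hk hkU
  exact ⟨xk k, hk.trans_lt (EReal.coe_lt_top c), hkU⟩

end Topological

variable {uk : ℕ → E → EReal} {u : E → EReal}

theorem convex_edom (h : EpiConv uk u) (hbot : ∀ k x, uk k x ≠ ⊥)
    (hconv : ∀ k, ConvexOn ℝ (edom (uk k)) (toRealFn (uk k))) : Convex ℝ (edom u) := by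
  intro x hx y hy a b ha hb hab
  obtain ⟨c, xk, hxk, hxc⟩ := h.exists_tendsto_eventually_le hx
  obtain ⟨d, yk, hyk, hyd⟩ := h.exists_tendsto_eventually_le hy
  have hlim : Tendsto (fun k => a • xk k + b • yk k) atTop (𝓝 (a • x + b • y)) :=
    (hxk.const_smul a).add (hyk.const_smul b)
  have hle : ∀ᶠ k in atTop, uk k (a • xk k + b • yk k) ≤ (max c d : ℝ) := by
    filter_upwards [hxc, hyd] with k hkx hky
    rw [le_coe_iff_mem_edom_and_toRealFn_le (hbot k _)] at hkx hky ⊢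
    exact (hconv k).convex_le (max c d) ⟨hkx.1, hkx.2.trans (le_max_left c d)⟩
      ⟨hky.1, hky.2.trans (le_max_right c d)⟩ ha hb hab
  exact h.lt_top_of_frequently_le ((tendsto_id.prodMk hlim).frequently hle.frequently)

/-- This fails without the interiors: `LipBound` says nothing about a domain with empty interior. -/
theorem kuratowskiLimsup_interior_edom_subset (h : EpiConv uk u) (hbot : ∀ k x, uk k x ≠ ⊥)
    (hconv : ∀ k, ConvexOn ℝ (edom (uk k)) (toRealFn (uk k))) {L : ℝ}
    (hlip : ∀ k, LipBound (uk k) L) (hne : (edom u).Nonempty) :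
    kuratowskiLimsup (fun k => interior (edom (uk k))) atTop ⊆ edom u := by
  intro x hx
  rw [mem_kuratowskiLimsup_iff_frequently_prod] at hx
  obtain ⟨x₀, hx₀⟩ := hne
  obtain ⟨c, xk, hxk, hxc⟩ := h.exists_tendsto_eventually_le hx₀
  have hdist : ∀ᶠ p : ℕ × E in atTop ×ˢ 𝓝 x, dist p.2 (xk p.1) ≤ dist x x₀ + 1 :=
    (tendsto_snd.dist (hxk.comp tendsto_fst)).eventually_le_const (lt_add_one _)
  refine h.lt_top_of_frequently_le (c := c + L.toNNReal * (dist x x₀ + 1)) ?_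
  refine (hx.and_eventually ((hxc.prod_inl _).and hdist)).mono ?_
  rintro ⟨k, z⟩ ⟨hz, hkc, hkz⟩
  rw [le_coe_iff_mem_edom_and_toRealFn_le (hbot k _)] at hkc ⊢
  refine ⟨interior_subset hz, ?_⟩
  calc toRealFn (uk k) z ≤ toRealFn (uk k) (xk k) + L.toNNReal * dist z (xk k) :=
      le_add_mul_dist_of_lipschitzOnWith_interior (hconv k) (hlip k).lipschitzOnWith hz hkc.1
    _ ≤ c + L.toNNReal * (dist x x₀ + 1) := by gcongr; exact hkc.2

end EpiConv

end EpiConvergence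

theorem IsLC.nonempty_edom_s5 {u : E → EReal} (h : IsLC u) : (edom u).Nonempty :=
  h.2.2.2.1.imp fun _ => lt_top_iff_ne_top.2

theorem IsLC.convexOn_s5 {u : E → EReal} (h : IsLC u) : ConvexOn ℝ (edom u) (toRealFn u) := by
  have hcoe : ∀ x ∈ edom u, ((toRealFn u x : ℝ) : EReal) = u x := fun x hx =>
    EReal.coe_toReal (ne_of_lt hx) (h.2.2.1 x)
  have hle : ∀ x ∈ edom u, ∀ y ∈ edom u, ∀ a b : ℝ, 0 < a → 0 < b → a + b = 1 →
      u (a • x + b • y) ≤ ((a * toRealFn u x + b * toRealFn u y : ℝ) : EReal) := by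
    intro x hx y hy a b ha hb hab
    obtain rfl : b = 1 - a := by linarith
    rw [EReal.coe_add, EReal.coe_mul, EReal.coe_mul, hcoe x hx, hcoe y hy]
    exact h.1 x y a ha (sub_pos.1 hb)
  have hconv : Convex ℝ (edom u) := convex_iff_forall_pos.2 fun x hx y hy a b ha hb hab =>
    (hle x hx y hy a b ha hb hab).trans_lt (EReal.coe_lt_top _)
  refine convexOn_iff_forall_pos.2 ⟨hconv, fun x hx y hy a b ha hb hab => ?_⟩
  rw [← EReal.coe_le_coe_iff, hcoe _ (hconv hx hy ha.le hb.le hab)]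
  exact hle x hx y hy a b ha hb hab

theorem stmt5_general [FiniteDimensional ℝ E] [MeasurableSpace E] [BorelSpace E] (μ : Measure E)
    [μ.IsAddHaarMeasure] {uk : ℕ → E → EReal} {u : E → EReal} (hepi : EpiConv uk u)
    (hbot : ∀ k x, uk k x ≠ ⊥) (hconv : ∀ k, ConvexOn ℝ (edom (uk k)) (toRealFn (uk k)))
    {L : ℝ} (hlip : ∀ k, LipBound (uk k) L) (hne : (edom u).Nonempty)
    (hbdd : Bornology.IsBounded (edom u)) :
    Tendsto (fun k => (μ (edom (uk k))).toReal) atTop (𝓝 (μ (edom u)).toReal) := by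
  have hlimsup := hepi.kuratowskiLimsup_interior_edom_subset hbot hconv hlip hne
  have hμ : Tendsto (fun k => μ (edom (uk k))) atTop (𝓝 (μ (edom u))) :=
    tendsto_measure_of_subset_kuratowskiLiminf μ (fun k => (hconv k).1)
      (hepi.convex_edom hbot hconv) hne hbdd hepi.edom_subset_kuratowskiLiminf
      (hlimsup.trans subset_closure)
  exact (ENNReal.tendsto_toReal hbdd.measure_lt_top.ne).comp hμ

/-- The functional `Z(u) = V_n(dom u)` is τ-continuous on `LC(ℝⁿ)`:
if `u_k` τ-converges to `u` then `V_n(dom u_k) → V_n(dom u)`. -/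
theorem stmt5 (n : ℕ) (uk : ℕ → EuclideanSpace ℝ (Fin n) → EReal)
    (u : EuclideanSpace ℝ (Fin n) → EReal) (h : TauConv uk u) :
    Tendsto (fun k => (volume (edom (uk k))).toReal) atTop
      (𝓝 ((volume (edom u)).toReal)) := by
  obtain ⟨hk, hu, hliminf, hrecovery, M, -, hM⟩ := h
  exact stmt5_general volume ⟨hliminf, hrecovery⟩ (fun k => (hk k).2.2.1)
    (fun k => (hk k).convexOn_s5) hM hu.nonempty_edom_s5 hu.2.2.2.2.1.isBounded

end
end

section
/- Let Z : LC(ℝⁿ) → ℝ be a simple, τ-upper semicontinuous valuation that is SL_n(ℝ) invariant, translation invariant and dually epi-translation invariant. Then there exists a constant c₁ ∈ ℝ such that Z(I_P) = c₁·V_n(P) for every polytope P ⊂ ℝⁿ. -/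
open MeasureTheory Filter Topology Pointwise Asymptotics

noncomputable section

variable {E : Type*} [NormedAddCommGroup E] [NormedSpace ℝ E]

/-- A polytope: the convex hull of a nonempty finite set of points. -/
def IsPolytope {F : Type*} [AddCommGroup F] [Module ℝ F] (P : Set F) : Prop :=
  ∃ s : Finset F, s.Nonempty ∧ P = convexHull ℝ (s : Set F)

/-!
On indicator functions `Z` becomes a simple valuation on convex bodies that is additive under
hyperplane cuts and invariant under affine maps of determinant one. Two simplices of equal volume
are related by such a map, so the value on a simplex is a function of its volume. Cutting a simplex
by a hyperplane through all but two of its vertices yields two simplices whose volumes add up to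
that of the whole, in any prescribed ratio, so this function solves Cauchy's functional equation;
upper semicontinuity makes the solution linear.

Subtracting a multiple of the volume leaves a simple valuation `F` that vanishes on simplices, and
such an `F` vanishes on every polytope. If a hyperplane separates vertices of a simplex, cutting
along edges reduces the number of vertices off the hyperplane, so `F` also vanishes on the
intersection of a simplex with a half-space. Hence `F (· ∩ H)` is again a simple valuation vanishing
on simplices for every half-space `H`, and inductively `F` vanishes on the intersection of a simplex
with a polyhedron. Cut a polytope along all facet hyperplanes of the simplices spanned by its
vertices: by Carathéodory's theorem these simplices cover it, so each full-dimensional cell lies in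
one of them and is the intersection of that simplex with a polyhedron.
-/

/-! ### Half-spaces -/

/-- The half-space where the affine functional `h` is nonnegative; the empty set and the whole
space occur as the degenerate half-spaces of constant functionals. -/
def halfspace (h : E →ᵃ[ℝ] ℝ) : Set E := {x | 0 ≤ h x}

section Halfspace

variable {h : E →ᵃ[ℝ] ℝ} {x : E}

lemma mem_halfspace : x ∈ halfspace h ↔ 0 ≤ h x := Iff.rfl

lemma mem_halfspace_neg : x ∈ halfspace (-h) ↔ h x ≤ 0 := by
  simp [mem_halfspace]

lemma convex_halfspace (h : E →ᵃ[ℝ] ℝ) : Convex ℝ (halfspace h) :=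
  (convex_Ici (0 : ℝ)).affine_preimage h

lemma isClosed_halfspace [FiniteDimensional ℝ E] (h : E →ᵃ[ℝ] ℝ) : IsClosed (halfspace h) :=
  isClosed_le continuous_const h.continuous_of_finiteDimensional

lemma halfspace_union_halfspace_neg (h : E →ᵃ[ℝ] ℝ) : halfspace h ∪ halfspace (-h) = Set.univ :=
  Set.eq_univ_of_forall fun x ↦ (le_total 0 (h x)).imp_right mem_halfspace_neg.2

lemma inter_halfspace_union_inter_halfspace_neg (K : Set E) (h : E →ᵃ[ℝ] ℝ) :
    K ∩ halfspace h ∪ K ∩ halfspace (-h) = K := by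
  rw [← Set.inter_union_distrib_left, halfspace_union_halfspace_neg, Set.inter_univ]

lemma inter_halfspace_inter_inter_halfspace_neg (K : Set E) (h : E →ᵃ[ℝ] ℝ) :
    K ∩ halfspace h ∩ (K ∩ halfspace (-h)) = K ∩ h ⁻¹' {0} := by
  ext x
  simp only [Set.mem_inter_iff, mem_halfspace_neg, Set.mem_preimage, Set.mem_singleton_iff,
    le_antisymm_iff]
  simp only [mem_halfspace]
  tauto

lemma addHaar_affineMap_preimage_zero [FiniteDimensional ℝ E] [MeasurableSpace E] [BorelSpace E]
    (μ : Measure E) [μ.IsAddHaarMeasure] (hh : h ≠ 0) : μ (h ⁻¹' {0}) = 0 := by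
  let H : AffineSubspace ℝ E := (AffineSubspace.mk' (0 : ℝ) ⊥).comap h
  have hH : (H : Set E) = h ⁻¹' {0} := by
    ext x
    simp [H]
  rw [← hH]
  refine Measure.addHaar_affineSubspace μ H fun htop ↦ hh ?_
  ext x
  have hx : x ∈ (H : Set E) := htop ▸ AffineSubspace.mem_top ℝ E x
  rwa [hH] at hx

lemma interior_affineMap_preimage_zero [FiniteDimensional ℝ E] (hh : h ≠ 0) :
    interior (h ⁻¹' {0}) = ∅ := by
  borelize E
  exact (Measure.addHaar : Measure E).interior_eq_empty_of_null
    (addHaar_affineMap_preimage_zero _ hh)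

lemma inter_preimage_zero_nonempty [FiniteDimensional ℝ E] {K : Set E} (hKc : Convex ℝ K)
    (h_pos : (K ∩ halfspace h).Nonempty) (h_neg : (K ∩ halfspace (-h)).Nonempty) :
    (K ∩ h ⁻¹' {0}).Nonempty := by
  obtain ⟨x, hxK, hx⟩ := h_pos
  obtain ⟨y, hyK, hy⟩ := h_neg
  exact hKc.isPreconnected.intermediate_value hyK hxK
    h.continuous_of_finiteDimensional.continuousOn ⟨mem_halfspace_neg.1 hy, hx⟩

end Halfspace

/-- A (possibly unbounded) convex polyhedron, as a finite intersection of half-spaces. -/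
inductive IsPolyhedral : Set E → Prop
  | univ : IsPolyhedral Set.univ
  | inter_halfspace {C : Set E} (hC : IsPolyhedral C) (h : E →ᵃ[ℝ] ℝ) :
      IsPolyhedral (C ∩ halfspace h)

lemma IsPolyhedral.convex {C : Set E} (hC : IsPolyhedral C) : Convex ℝ C := by
  induction hC with
  | univ => exact convex_univ
  | inter_halfspace _ h ih => exact ih.inter (convex_halfspace h)

lemma IsPolyhedral.isClosed [FiniteDimensional ℝ E] {C : Set E} (hC : IsPolyhedral C) :
    IsClosed C := by
  induction hC with
  | univ => exact isClosed_univ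
  | inter_halfspace _ h ih => exact ih.inter (isClosed_halfspace h)

/-! ### Simple valuations on convex bodies -/

/-- A simple valuation on the compact convex sets. Additivity is required only for cuts by a
hyperplane, the form in which simplicity leaves the valuation property to be used. -/
structure IsSimpleValuation {G : Type*} [AddCommGroup G] (F : Set E → G) : Prop where
  cut {K : Set E} (hK : IsCompact K) (hKc : Convex ℝ K) {h : E →ᵃ[ℝ] ℝ} (hh : h ≠ 0) :
    F (K ∩ halfspace h) + F (K ∩ halfspace (-h)) = F K
  eq_zero {K : Set E} (hK : IsCompact K) (hKc : Convex ℝ K) (hK₀ : interior K = ∅) : F K = 0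

namespace IsSimpleValuation

variable {G : Type*} [AddCommGroup G] {F F' : Set E → G}

lemma inter (hF : IsSimpleValuation F) {C : Set E} (hC : IsClosed C) (hCc : Convex ℝ C) :
    IsSimpleValuation fun K ↦ F (K ∩ C) where
  cut {K} hK hKc h hh := by
    rw [Set.inter_right_comm, Set.inter_right_comm _ _ C]
    exact hF.cut (hK.inter_right hC) (hKc.inter hCc) hh
  eq_zero {K} hK hKc hK₀ := by
    refine hF.eq_zero (hK.inter_right hC) (hKc.inter hCc) ?_
    rw [interior_inter, hK₀, Set.empty_inter]

lemma sub (hF : IsSimpleValuation F) (hF' : IsSimpleValuation F') :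
    IsSimpleValuation fun K ↦ F K - F' K where
  cut hK hKc _ hh := by rw [← hF.cut hK hKc hh, ← hF'.cut hK hKc hh, add_sub_add_comm]
  eq_zero hK hKc hK₀ := by rw [hF.eq_zero hK hKc hK₀, hF'.eq_zero hK hKc hK₀, sub_zero]

lemma const_mul {F : Set E → ℝ} (hF : IsSimpleValuation F) (c : ℝ) :
    IsSimpleValuation fun K ↦ c * F K where
  cut hK hKc _ hh := by rw [← mul_add, hF.cut hK hKc hh]
  eq_zero hK hKc hK₀ := by rw [hF.eq_zero hK hKc hK₀, mul_zero]

end IsSimpleValuation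

lemma isSimpleValuation_measureReal [FiniteDimensional ℝ E] [MeasurableSpace E] [BorelSpace E]
    (μ : Measure E) [μ.IsAddHaarMeasure] : IsSimpleValuation (μ.real : Set E → ℝ) where
  cut {K} hK _ h hh := by
    have hK' : IsCompact (K ∩ halfspace (-h)) := hK.inter_right (isClosed_halfspace _)
    have h_union := measureReal_union_add_inter (μ := μ) (s := K ∩ halfspace h) hK'.measurableSet
      (hK.inter_right (isClosed_halfspace h)).measure_lt_top.ne hK'.measure_lt_top.ne
    have h_inter : μ.real (K ∩ h ⁻¹' {0}) = 0 :=
      measureReal_mono_null Set.inter_subset_right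
        (by rw [measureReal_def, addHaar_affineMap_preimage_zero μ hh, ENNReal.toReal_zero])
        (by simp [addHaar_affineMap_preimage_zero μ hh])
    rw [← h_union, inter_halfspace_union_inter_halfspace_neg,
      inter_halfspace_inter_inter_halfspace_neg, h_inter, add_zero]
  eq_zero {K} hK hKc hK₀ := by
    have hK_null : μ K = 0 := by
      rw [← hKc.addHaar_frontier μ, hK.isClosed.frontier_eq, hK₀, Set.sdiff_empty]
    rw [measureReal_def, hK_null, ENNReal.toReal_zero]

/-! ### Affine bases and affine automorphisms -/

section AffineBasis

variable {k V ι : Type*} [Field k] [AddCommGroup V] [Module k V]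

/-- The affine basis obtained by applying an affine automorphism to all points of `b`. -/
def mapAffineBasis (A : V ≃ᵃ[k] V) (b : AffineBasis ι k V) : AffineBasis ι k V where
  toFun := A ∘ b
  ind' := A.affineIndependent_iff.2 b.ind
  tot' := by rw [Set.range_comp, ← A.span_eq_top_iff, b.tot]

@[simp]
lemma mapAffineBasis_apply (A : V ≃ᵃ[k] V) (b : AffineBasis ι k V) (i : ι) :
    mapAffineBasis A b i = A (b i) := rfl

lemma exists_mapAffineBasis_eq (b b' : AffineBasis ι k V) :
    ∃ A : V ≃ᵃ[k] V, mapAffineBasis A b = b' := by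
  obtain ⟨i⟩ := b.nonempty
  let L : V ≃ₗ[k] V := (b.basisOf i).equiv (b'.basisOf i) (Equiv.refl _)
  refine ⟨AffineEquiv.mk' (fun x ↦ L (x - b i) + b' i) L (b i) (by simp),
    AffineBasis.ext <| funext fun l ↦ ?_⟩
  change L (b l - b i) + b' i = b' l
  rcases eq_or_ne l i with rfl | hl
  · rw [sub_self, map_zero, zero_add]
  · have hL : L (b l - b i) = b' l - b' i := by
      simpa using (b.basisOf i).equiv_apply ⟨l, hl⟩ (b'.basisOf i) (Equiv.refl _)
    rw [hL, sub_add_cancel]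

/-- The affine automorphism `x ↦ x + c x • w`, the affine version of
`LinearEquiv.dilatransvection`. -/
def affineDilatransvection (c : V →ᵃ[k] k) (w : V) (hw : 1 + c.linear w ≠ 0) : V ≃ᵃ[k] V :=
  AffineEquiv.mk' (fun x ↦ x + c x • w) (LinearEquiv.dilatransvection (IsUnit.mk0 _ hw)) 0
    fun x ↦ by
      have hcx : c x = c.linear x + c 0 := congrFun c.decomp x
      simp only [LinearEquiv.dilatransvection.apply, hcx, vsub_eq_sub, sub_zero, zero_add,
        vadd_eq_add, add_smul, add_assoc]

@[simp]
lemma affineDilatransvection_apply (c : V →ᵃ[k] k) (w : V) (hw : 1 + c.linear w ≠ 0) (x : V) :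
    affineDilatransvection c w hw x = x + c x • w := rfl

lemma det_linear_affineDilatransvection [FiniteDimensional k V] (c : V →ᵃ[k] k) (w : V)
    (hw : 1 + c.linear w ≠ 0) :
    LinearMap.det ((affineDilatransvection c w hw).linear : V →ₗ[k] V) = 1 + c.linear w :=
  LinearMap.transvection.det _ _

variable (b : AffineBasis ι k V) {i j l : ι} {v : k}

lemma linear_coord_sub (h : i ≠ j) : (b.coord i).linear (b j - b i) = -1 := by
  rw [← vsub_eq_sub, AffineMap.linearMap_vsub, b.coord_apply_eq, b.coord_apply_ne h]
  simp

lemma one_add_linear_smul_coord_sub (hij : i ≠ j) (v : k) :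
    1 + ((1 - v) • b.coord i).linear (b j - b i) = v := by
  rw [AffineMap.smul_linear, LinearMap.smul_apply, linear_coord_sub b hij, smul_eq_mul]
  ring

/-- The affine automorphism fixing all points of `b` except `b i`, which it slides along the line
to `b j` in such a way that its distance to `b j` is multiplied by `v`. -/
def slide (hij : i ≠ j) (hv : v ≠ 0) : V ≃ᵃ[k] V :=
  affineDilatransvection ((1 - v) • b.coord i) (b j - b i)
    (by rwa [one_add_linear_smul_coord_sub b hij])

lemma slide_apply_self (hij : i ≠ j) (hv : v ≠ 0) :
    slide b hij hv (b i) = AffineMap.lineMap (b j) (b i) v := by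
  simp only [slide, affineDilatransvection_apply, AffineMap.coe_smul, Pi.smul_apply,
    b.coord_apply_eq, smul_eq_mul, mul_one, AffineMap.lineMap_apply_module]
  module

lemma slide_apply_of_ne (hij : i ≠ j) (hv : v ≠ 0) (hl : l ≠ i) : slide b hij hv (b l) = b l := by
  simp [slide, b.coord_apply_ne hl.symm]

lemma det_linear_slide [FiniteDimensional k V] (hij : i ≠ j) (hv : v ≠ 0) :
    LinearMap.det ((slide b hij hv).linear : V →ₗ[k] V) = v := by
  rw [slide, det_linear_affineDilatransvection, one_add_linear_smul_coord_sub b hij]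

lemma coord_slide (hij : i ≠ j) (hv : v ≠ 0) (x : V) :
    b.coord l (slide b hij hv x) =
      b.coord l x + (1 - v) * b.coord i x * (b.coord l (b j) - b.coord l (b i)) := by
  have h_sub : (b.coord l).linear (b j - b i) = b.coord l (b j) - b.coord l (b i) :=
    (b.coord l).linearMap_vsub _ _
  rw [slide, affineDilatransvection_apply, add_comm, ← vadd_eq_add, AffineMap.map_vadd, map_smul,
    h_sub, vadd_eq_add, add_comm]
  rfl

lemma coord_slide_self (hij : i ≠ j) (hv : v ≠ 0) (x : V) :
    b.coord i (slide b hij hv x) = v * b.coord i x := by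
  rw [coord_slide, b.coord_apply_eq, b.coord_apply_ne hij]
  ring

lemma coord_slide_right (hij : i ≠ j) (hv : v ≠ 0) (x : V) :
    b.coord j (slide b hij hv x) = b.coord j x + (1 - v) * b.coord i x := by
  rw [coord_slide, b.coord_apply_eq, b.coord_apply_ne hij.symm]
  ring

lemma coord_slide_of_ne (hij : i ≠ j) (hv : v ≠ 0) (hli : l ≠ i) (hlj : l ≠ j) (x : V) :
    b.coord l (slide b hij hv x) = b.coord l x := by
  rw [coord_slide, b.coord_apply_ne hli, b.coord_apply_ne hlj]
  ring

lemma exists_det_eq_neg_one_range_mapAffineBasis_eq [FiniteDimensional k V] (hij : i ≠ j) :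
    ∃ A : V ≃ᵃ[k] V, LinearMap.det (A.linear : V →ₗ[k] V) = -1 ∧
      Set.range (mapAffineBasis A b) = Set.range b := by
  classical
  have h_one_add : 1 + (b.coord i - b.coord j).linear (b j - b i) = -1 := by
    have h_j : (b.coord j).linear (b j - b i) = 1 := by
      rw [← neg_sub (b i), map_neg, linear_coord_sub b hij.symm, neg_neg]
    rw [AffineMap.sub_linear, LinearMap.sub_apply, linear_coord_sub b hij, h_j]
    ring
  refine ⟨affineDilatransvection (b.coord i - b.coord j) (b j - b i)
    (by rw [h_one_add]; exact neg_ne_zero.2 one_ne_zero),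
    by rw [det_linear_affineDilatransvection, h_one_add], ?_⟩
  rw [← (Equiv.swap i j).surjective.range_comp b]
  congr 1
  funext l
  simp only [mapAffineBasis_apply, affineDilatransvection_apply, AffineMap.coe_sub, Pi.sub_apply,
    Function.comp_apply]
  rcases eq_or_ne l i with rfl | hli
  · simp [b.coord_apply_ne hij.symm]
  · rcases eq_or_ne l j with rfl | hlj
    · simp [b.coord_apply_ne hij]
    · simp [b.coord_apply_ne hli.symm, b.coord_apply_ne hlj.symm, Equiv.swap_apply_of_ne_of_ne,
        hli, hlj]

end AffineBasis

/-! ### Simplices -/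

section Simplex

variable {ι : Type*}

/-- The full-dimensional simplex whose vertices are the points of the affine basis `b`. -/
def simplex (b : AffineBasis ι ℝ E) : Set E := convexHull ℝ (Set.range b)

lemma mem_simplex {b : AffineBasis ι ℝ E} {x : E} : x ∈ simplex b ↔ ∀ i, 0 ≤ b.coord i x := by
  rw [simplex, b.convexHull_eq_nonneg_coord]
  rfl

variable (b : AffineBasis ι ℝ E)

lemma convex_simplex : Convex ℝ (simplex b) := convex_convexHull ℝ _

lemma isCompact_simplex [Finite ι] : IsCompact (simplex b) :=
  (Set.finite_range b).isCompact_convexHull ℝ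

lemma simplex_nonempty : (simplex b).Nonempty :=
  convexHull_nonempty_iff.2 (Set.range_nonempty_iff_nonempty.2 b.nonempty)

variable {b} in
lemma simplex_subset_iff {C : Set E} (hC : Convex ℝ C) : simplex b ⊆ C ↔ ∀ i, b i ∈ C := by
  rw [simplex, hC.convexHull_subset_iff, Set.range_subset_iff]

lemma simplex_mapAffineBasis (A : E ≃ᵃ[ℝ] E) : simplex (mapAffineBasis A b) = A '' simplex b := by
  rw [simplex, simplex, ← AffineEquiv.coe_toAffineMap, AffineMap.image_convexHull, ← Set.range_comp]
  rfl

variable {b} in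
lemma simplex_mapAffineBasis_slide {i j : ι} (hij : i ≠ j) {v : ℝ} (hv₀ : 0 < v) (hv₁ : v ≤ 1) :
    simplex (mapAffineBasis (slide b hij hv₀.ne') b) =
      simplex b ∩ halfspace (v • b.coord j - (1 - v) • b.coord i) := by
  ext y
  obtain ⟨x, rfl⟩ := (slide b hij hv₀.ne').surjective y
  have h_cut : (v • b.coord j - (1 - v) • b.coord i) (slide b hij hv₀.ne' x) = v * b.coord j x := by
    simp only [AffineMap.coe_sub, AffineMap.coe_smul, Pi.sub_apply, Pi.smul_apply, smul_eq_mul,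
      coord_slide_self, coord_slide_right]
    ring
  rw [simplex_mapAffineBasis, (slide b hij hv₀.ne').injective.mem_set_image, Set.mem_inter_iff,
    mem_halfspace, h_cut, mul_nonneg_iff_of_pos_left hv₀, mem_simplex, mem_simplex]
  refine ⟨fun hx ↦ ⟨fun l ↦ ?_, hx j⟩, fun ⟨hx, hxj⟩ l ↦ ?_⟩
  · rcases eq_or_ne l i with rfl | hli
    · rw [coord_slide_self]
      exact mul_nonneg hv₀.le (hx l)
    rcases eq_or_ne l j with rfl | hlj
    · rw [coord_slide_right]
      exact add_nonneg (hx l) (mul_nonneg (sub_nonneg.2 hv₁) (hx i))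
    · rw [coord_slide_of_ne b hij hv₀.ne' hli hlj]
      exact hx l
  · rcases eq_or_ne l i with rfl | hli
    · exact (mul_nonneg_iff_of_pos_left hv₀).1 (coord_slide_self b hij hv₀.ne' x ▸ hx l)
    rcases eq_or_ne l j with rfl | hlj
    · exact hxj
    · exact coord_slide_of_ne b hij hv₀.ne' hli hlj x ▸ hx l

lemma IsSimpleValuation.simplex_eq_add [Finite ι] {G : Type*} [AddCommGroup G] {F : Set E → G}
    (hF : IsSimpleValuation F) {i j : ι} (hij : i ≠ j) {v : ℝ} (hv₀ : 0 < v) (hv₁ : v < 1) :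
    F (simplex b) = F (simplex (mapAffineBasis (slide b hij hv₀.ne') b)) +
      F (simplex (mapAffineBasis (slide b hij.symm (sub_pos.2 hv₁).ne') b)) := by
  have h_ne : v • b.coord j - (1 - v) • b.coord i ≠ 0 := fun h ↦ by
    have h_apply := congrArg (fun f : E →ᵃ[ℝ] ℝ ↦ f (b j)) h
    simp [b.coord_apply_ne hij, hv₀.ne'] at h_apply
  have h_neg : -(v • b.coord j - (1 - v) • b.coord i) =
      (1 - v) • b.coord i - (1 - (1 - v)) • b.coord j := by
    rw [neg_sub, sub_sub_cancel]
  rw [simplex_mapAffineBasis_slide hij hv₀ hv₁.le,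
    simplex_mapAffineBasis_slide hij.symm (sub_pos.2 hv₁) (sub_le_self 1 hv₀.le), ← h_neg,
    hF.cut (isCompact_simplex b) (convex_simplex b) h_ne]

lemma exists_image_simplex_eq (b b' : AffineBasis ι ℝ E) :
    ∃ A : E ≃ᵃ[ℝ] E, A '' simplex b = simplex b' := by
  obtain ⟨A, rfl⟩ := exists_mapAffineBasis_eq b b'
  exact ⟨A, (simplex_mapAffineBasis b A).symm⟩

lemma exists_det_eq_neg_one_image_simplex_eq [FiniteDimensional ℝ E] {i j : ι} (hij : i ≠ j) :
    ∃ A : E ≃ᵃ[ℝ] E, LinearMap.det (A.linear : E →ₗ[ℝ] E) = -1 ∧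
      A '' simplex b = simplex b := by
  obtain ⟨A, hA, h_range⟩ := exists_det_eq_neg_one_range_mapAffineBasis_eq b hij
  exact ⟨A, hA, by rw [← simplex_mapAffineBasis, simplex, h_range, simplex]⟩

lemma measureReal_image_affineEquiv [FiniteDimensional ℝ E] [MeasurableSpace E] [BorelSpace E]
    (μ : Measure E) [μ.IsAddHaarMeasure] (A : E ≃ᵃ[ℝ] E) (K : Set E) :
    μ.real (A '' K) = |LinearMap.det (A.linear : E →ₗ[ℝ] E)| * μ.real K := by
  have hA : (A : E → E) = (· + A 0) ∘ (A.linear : E →ₗ[ℝ] E) := (A : E →ᵃ[ℝ] E).decomp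
  rw [hA, Set.image_comp, Set.image_add_right, measureReal_def, measure_preimage_add_right,
    Measure.addHaar_image_linearMap, ENNReal.toReal_mul, ENNReal.toReal_ofReal (abs_nonneg _),
    measureReal_def]

lemma measureReal_simplex_pos [FiniteDimensional ℝ E] [MeasurableSpace E] (μ : Measure E)
    [μ.IsAddHaarMeasure] : 0 < μ.real (simplex b) := by
  have : Finite ι := b.finite
  have h_int : (interior (simplex b)).Nonempty := by
    rw [simplex, interior_convexHull_nonempty_iff_affineSpan_eq_top, b.tot]
  exact ENNReal.toReal_pos (Measure.measure_pos_of_nonempty_interior μ h_int).ne'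
    (isCompact_simplex b).measure_lt_top.ne

lemma measureReal_simplex_mapAffineBasis_slide [FiniteDimensional ℝ E] [MeasurableSpace E]
    [BorelSpace E] (μ : Measure E) [μ.IsAddHaarMeasure] {i j : ι} (hij : i ≠ j) {v : ℝ}
    (hv : 0 < v) :
    μ.real (simplex (mapAffineBasis (slide b hij hv.ne') b)) = v * μ.real (simplex b) := by
  rw [simplex_mapAffineBasis, measureReal_image_affineEquiv, det_linear_slide, abs_of_pos hv]

end Simplex

/-! ### Simple valuations vanishing on simplices -/

section Vanishing

variable {ι G : Type*} [AddCommGroup G] {F : Set E → G}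

lemma ncard_slide_lt [Finite ι] (b : AffineBasis ι ℝ E) {i j : ι} (hij : i ≠ j) {v : ℝ}
    (hv : v ≠ 0) {g : E →ᵃ[ℝ] ℝ} (hgi : g (b i) ≠ 0)
    (hg : g (AffineMap.lineMap (b j) (b i) v) = 0) :
    {l | g (mapAffineBasis (slide b hij hv) b l) ≠ 0}.ncard < {l | g (b l) ≠ 0}.ncard := by
  refine Set.ncard_lt_ncard (Set.ssubset_iff_of_subset (fun l hl ↦ ?_) |>.2 ⟨i, hgi, fun hi ↦ ?_⟩)
  · rcases eq_or_ne l i with rfl | hli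
    · exact hgi
    · rwa [Set.mem_ofPred_eq, mapAffineBasis_apply, slide_apply_of_ne b hij hv hli] at hl
  · rw [Set.mem_ofPred_eq, mapAffineBasis_apply, slide_apply_self] at hi
    exact hi hg

lemma simplex_inter_halfspace_subset_preimage_zero {b : AffineBasis ι ℝ E} {g : E →ᵃ[ℝ] ℝ}
    (hg : ∀ i, g (b i) ≤ 0) : simplex b ∩ halfspace g ⊆ g ⁻¹' {0} := by
  have h_neg : simplex b ⊆ halfspace (-g) :=
    (simplex_subset_iff (convex_halfspace _)).2 fun i ↦ mem_halfspace_neg.2 (hg i)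
  exact fun x hx ↦ le_antisymm (mem_halfspace_neg.1 (h_neg hx.1)) hx.2

lemma exists_mem_Ioo_apply_lineMap_eq_zero {k V : Type*} [Field k] [LinearOrder k]
    [IsStrictOrderedRing k] [AddCommGroup V] [Module k V] {g : V →ᵃ[k] k} {p q : V} (hp : g p < 0)
    (hq : 0 < g q) : ∃ v ∈ Set.Ioo (0 : k) 1, g (AffineMap.lineMap p q v) = 0 := by
  have h_pos : 0 < g q - g p := sub_pos.2 (hp.trans hq)
  refine ⟨-g p / (g q - g p), ⟨div_pos (neg_pos.2 hp) h_pos,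
    (div_lt_one h_pos).2 (neg_lt_sub_iff_lt_add.2 (lt_add_of_pos_right _ hq))⟩, ?_⟩
  rw [AffineMap.apply_lineMap, AffineMap.lineMap_apply_module', smul_eq_mul,
    div_mul_cancel₀ _ h_pos.ne', neg_add_cancel]

namespace IsSimpleValuation

-- When `g` changes sign along an edge, cutting the simplex at the zero of `g` on that edge leaves
-- two simplices with one more vertex on the hyperplane `g = 0`.
lemma simplex_inter_halfspace_eq_zero [Finite ι] (hF : IsSimpleValuation F)
    (hF₀ : ∀ b : AffineBasis ι ℝ E, F (simplex b) = 0) (b : AffineBasis ι ℝ E) (g : E →ᵃ[ℝ] ℝ) :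
    F (simplex b ∩ halfspace g) = 0 := by
  have : FiniteDimensional ℝ E := b.finiteDimensional
  induction hm : {l | g (b l) ≠ 0}.ncard using Nat.strong_induction_on generalizing b with
  | h m ih =>
    by_cases h_nonneg : ∀ l, 0 ≤ g (b l)
    · rw [Set.inter_eq_left.2 ((simplex_subset_iff (convex_halfspace g)).2 h_nonneg), hF₀]
    obtain ⟨j, hj⟩ := not_forall.1 h_nonneg
    rw [not_le] at hj
    by_cases h_nonpos : ∀ l, g (b l) ≤ 0
    · have hg : g ≠ 0 := fun h ↦ by simp [h] at hj
      exact hF.eq_zero ((isCompact_simplex b).inter_right (isClosed_halfspace g))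
        ((convex_simplex b).inter (convex_halfspace g)) <| Set.subset_empty_iff.1 <|
        (interior_mono (simplex_inter_halfspace_subset_preimage_zero h_nonpos)).trans
          (interior_affineMap_preimage_zero hg).subset
    obtain ⟨i, hi⟩ := not_forall.1 h_nonpos
    rw [not_le] at hi
    have hij : i ≠ j := fun h ↦ hj.not_gt (h ▸ hi)
    obtain ⟨v, ⟨hv₀, hv₁⟩, hv⟩ := exists_mem_Ioo_apply_lineMap_eq_zero hj hi
    have hv' : g (AffineMap.lineMap (b i) (b j) (1 - v)) = 0 := by
      rwa [AffineMap.lineMap_apply_one_sub]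
    rw [(hF.inter (isClosed_halfspace g) (convex_halfspace g)).simplex_eq_add b hij hv₀ hv₁,
      ih _ (hm ▸ ncard_slide_lt b hij _ hi.ne' hv) _ rfl,
      ih _ (hm ▸ ncard_slide_lt b hij.symm _ hj.ne hv') _ rfl, add_zero]

lemma simplex_inter_eq_zero [Finite ι] (hF : IsSimpleValuation F)
    (hF₀ : ∀ b : AffineBasis ι ℝ E, F (simplex b) = 0) (b : AffineBasis ι ℝ E) {C : Set E}
    (hC : IsPolyhedral C) : F (simplex b ∩ C) = 0 := by
  have : FiniteDimensional ℝ E := b.finiteDimensional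
  induction hC generalizing F with
  | univ => rw [Set.inter_univ, hF₀]
  | inter_halfspace _ h ih =>
    rw [← Set.inter_assoc]
    exact ih (hF.inter (isClosed_halfspace h) (convex_halfspace h))
      fun b ↦ hF.simplex_inter_halfspace_eq_zero hF₀ b h

lemma eq_zero_of_forall_isPolyhedral [FiniteDimensional ℝ E] (hF : IsSimpleValuation F) {K : Set E}
    (hK : IsCompact K) (hKc : Convex ℝ K) {𝒢 : Set (E →ᵃ[ℝ] ℝ)} (h𝒢 : 𝒢.Finite)
    (h_cell : ∀ C, IsPolyhedral C →
      (∀ g ∈ 𝒢, K ∩ C ⊆ halfspace g ∨ K ∩ C ⊆ halfspace (-g)) → F (K ∩ C) = 0) :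
    F K = 0 := by
  induction 𝒢, h𝒢 using Set.Finite.induction_on with
  | empty => simpa using h_cell Set.univ .univ (by simp)
  | @insert g 𝒢 _ _ ih =>
    refine ih fun C hC h_side ↦ ?_
    rcases eq_or_ne g 0 with rfl | hg
    · refine h_cell C hC (Set.forall_mem_insert.2 ⟨Or.inl fun x _ ↦ ?_, h_side⟩)
      exact le_refl (0 : ℝ)
    have h_piece (f : E →ᵃ[ℝ] ℝ) (hf : K ∩ (C ∩ halfspace f) ⊆ halfspace g ∨
        K ∩ (C ∩ halfspace f) ⊆ halfspace (-g)) : F (K ∩ C ∩ halfspace f) = 0 := by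
      rw [Set.inter_assoc]
      refine h_cell _ (hC.inter_halfspace f) (Set.forall_mem_insert.2 ⟨hf, fun g' hg' ↦ ?_⟩)
      have h_sub : K ∩ (C ∩ halfspace f) ⊆ K ∩ C :=
        Set.inter_subset_inter_right _ Set.inter_subset_left
      exact (h_side g' hg').imp h_sub.trans h_sub.trans
    rw [← hF.cut (hK.inter_right hC.isClosed) (hKc.inter hC.convex) hg,
      h_piece g (Or.inl fun _ hx ↦ hx.2.2), h_piece (-g) (Or.inr fun _ hx ↦ hx.2.2), add_zero]

end IsSimpleValuation

lemma interior_biUnion_eq_empty {X α : Type*} [TopologicalSpace X] {T : Set α} (hT : T.Finite)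
    {S : α → Set X} (h_closed : ∀ t ∈ T, IsClosed (S t)) (h_int : ∀ t ∈ T, interior (S t) = ∅) :
    interior (⋃ t ∈ T, S t) = ∅ := by
  induction T, hT using Set.Finite.induction_on with
  | empty => simp
  | @insert t T _ _ ih =>
    rw [Set.forall_mem_insert] at h_closed h_int
    rw [Set.biUnion_insert, interior_union_isClosed_of_interior_empty h_closed.1
      (ih h_closed.2 h_int.2), h_int.1]

lemma exists_affineBasis_range_eq [FiniteDimensional ℝ E]
    (hι : Nat.card ι = Module.finrank ℝ E + 1) {t : Set E}
    (ht : AffineIndependent ℝ ((↑) : t → E)) (ht' : affineSpan ℝ t = ⊤) :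
    ∃ b : AffineBasis ι ℝ E, Set.range b = t := by
  let b₀ : AffineBasis t ℝ E := ⟨(↑), ht, by rwa [Subtype.range_coe]⟩
  have : Finite t := b₀.finite
  have : Finite ι := Nat.finite_of_card_ne_zero (by omega)
  have : Fintype t := Fintype.ofFinite t
  have h_card : Nat.card t = Nat.card ι := by
    rw [Nat.card_eq_fintype_card, b₀.card_eq_finrank_add_one, hι]
  obtain ⟨e⟩ := Finite.card_eq.1 h_card
  refine ⟨b₀.reindex e, ?_⟩
  rw [AffineBasis.coe_reindex, EquivLike.range_comp]
  exact Subtype.range_coe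

lemma exists_affineBasis_interior_inter_simplex_nonempty [FiniteDimensional ℝ E]
    (hι : Nat.card ι = Module.finrank ℝ E + 1) {s : Set E} (hs : s.Finite) {K : Set E}
    (hK : IsClosed K) (hKs : K ⊆ convexHull ℝ s) (hK_int : (interior K).Nonempty) :
    ∃ b : AffineBasis ι ℝ E, Set.range b ⊆ s ∧ (interior (K ∩ simplex b)).Nonempty := by
  let T : Set (Set E) := {t ∈ 𝒫 s | AffineIndependent ℝ ((↑) : t → E)}
  have hT : T.Finite := hs.finite_subsets.subset fun t ht ↦ ht.1
  have h_cover : K ⊆ ⋃ t ∈ T, K ∩ convexHull ℝ t := fun x hx ↦ by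
    have hxs := hKs hx
    rw [convexHull_eq_union] at hxs
    simp only [Set.mem_iUnion] at hxs ⊢
    obtain ⟨t, hts, ht, hxt⟩ := hxs
    exact ⟨t, ⟨hts, ht⟩, hx, hxt⟩
  obtain ⟨t, ⟨hts, ht⟩, h_int⟩ : ∃ t ∈ T, (interior (K ∩ convexHull ℝ t)).Nonempty := by
    by_contra! h_empty
    refine hK_int.ne_empty (Set.subset_empty_iff.1 ((interior_mono h_cover).trans ?_))
    exact (interior_biUnion_eq_empty hT (fun t ht ↦
      hK.inter ((hs.subset ht.1).isClosed_convexHull ℝ)) h_empty).subset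
  have h_span : affineSpan ℝ t = ⊤ := interior_convexHull_nonempty_iff_affineSpan_eq_top.1
    (h_int.mono (interior_mono Set.inter_subset_right))
  obtain ⟨b, rfl⟩ := exists_affineBasis_range_eq hι ht h_span
  exact ⟨b, hts, h_int⟩

lemma subset_simplex_of_interior_inter_nonempty [Finite ι] {b : AffineBasis ι ℝ E} {K : Set E}
    (hK : ∀ i, K ⊆ halfspace (b.coord i) ∨ K ⊆ halfspace (-b.coord i))
    (hKb : (interior (K ∩ simplex b)).Nonempty) : K ⊆ simplex b := by
  obtain ⟨x, hx⟩ := hKb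
  rw [interior_inter, simplex, b.interior_convexHull] at hx
  refine fun y hy ↦ mem_simplex.2 fun i ↦ ((hK i).resolve_right fun h ↦ ?_) hy
  exact (mem_halfspace_neg.1 (h (interior_subset hx.1))).not_gt (hx.2 i)

lemma finite_affineBasis_range_subset [Finite ι] {s : Set E} (hs : s.Finite) :
    {b : AffineBasis ι ℝ E | Set.range b ⊆ s}.Finite :=
  ((Set.Finite.pi' fun _ ↦ hs).preimage (DFunLike.coe_injective.injOn)).subset
    fun _ hb i ↦ hb ⟨i, rfl⟩

theorem IsSimpleValuation.eq_zero_of_isPolytope [FiniteDimensional ℝ E] (hF : IsSimpleValuation F)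
    (hι : Nat.card ι = Module.finrank ℝ E + 1) (hF₀ : ∀ b : AffineBasis ι ℝ E, F (simplex b) = 0)
    {P : Set E} (hP : IsPolytope P) : F P = 0 := by
  obtain ⟨s, -, rfl⟩ := hP
  have : Finite ι := Nat.finite_of_card_ne_zero (by omega)
  have h𝒢 : (⋃ b ∈ {b : AffineBasis ι ℝ E | Set.range b ⊆ s}, Set.range b.coord).Finite :=
    (finite_affineBasis_range_subset s.finite_toSet).biUnion fun b _ ↦ Set.finite_range b.coord
  have hP : IsCompact (convexHull ℝ (s : Set E)) := s.finite_toSet.isCompact_convexHull ℝ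
  refine hF.eq_zero_of_forall_isPolyhedral hP (convex_convexHull ℝ _) h𝒢 fun C hC h_side ↦ ?_
  set K := convexHull ℝ (s : Set E) ∩ C
  have hK : IsCompact K := hP.inter_right hC.isClosed
  rcases (interior K).eq_empty_or_nonempty with hK_int | hK_int
  · exact hF.eq_zero hK ((convex_convexHull ℝ _).inter hC.convex) hK_int
  obtain ⟨b, hbs, hKb⟩ := exists_affineBasis_interior_inter_simplex_nonempty hι s.finite_toSet
    hK.isClosed Set.inter_subset_left hK_int
  have h_sub : K ⊆ simplex b := subset_simplex_of_interior_inter_nonempty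
    (fun i ↦ h_side _ (Set.mem_biUnion hbs ⟨i, rfl⟩)) hKb
  have hK_eq : K = simplex b ∩ C :=
    (Set.subset_inter h_sub Set.inter_subset_right).antisymm
      (Set.inter_subset_inter_left C (convexHull_mono hbs))
  rw [hK_eq, hF.simplex_inter_eq_zero hF₀ b hC]

end Vanishing

/-! ### Cauchy's functional equation -/

lemma exists_addMonoidHom_eq_of_pos {R H : Type*} [Ring R] [LinearOrder R] [IsStrictOrderedRing R]
    [AddCommGroup H] {f : R → H} (hf : ∀ x > 0, ∀ y > 0, f (x + y) = f x + f y) :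
    ∃ φ : R →+ H, ∀ x > 0, φ x = f x := by
  let φ : R → H := fun x ↦ f (x⁺ + 1) - f (x⁻ + 1)
  have hφ {p q : R} (hp : 0 < p) (hq : 0 < q) : φ (p - q) = f p - f q := by
    have h_pos : 0 < (p - q)⁺ + 1 := add_pos_of_nonneg_of_pos (posPart_nonneg _) one_pos
    have h_neg : 0 < (p - q)⁻ + 1 := add_pos_of_nonneg_of_pos (negPart_nonneg _) one_pos
    have h_eq : (p - q)⁺ + 1 + q = p + ((p - q)⁻ + 1) := by
      have h_sub := posPart_sub_negPart (p - q)
      rw [sub_eq_iff_eq_add] at h_sub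
      rw [h_sub]
      abel
    rw [sub_eq_sub_iff_add_eq_add, ← hf _ h_pos _ hq, h_eq, hf _ hp _ h_neg]
  have h_surj (x : R) : ∃ p > 0, ∃ q > 0, x = p - q :=
    ⟨x⁺ + 1, add_pos_of_nonneg_of_pos (posPart_nonneg _) one_pos, x⁻ + 1,
      add_pos_of_nonneg_of_pos (negPart_nonneg _) one_pos, by simp⟩
  refine ⟨AddMonoidHom.mk' φ fun x y ↦ ?_, fun x hx ↦ ?_⟩
  · obtain ⟨p, hp, q, hq, rfl⟩ := h_surj x
    obtain ⟨p', hp', q', hq', rfl⟩ := h_surj y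
    rw [sub_add_sub_comm, hφ (add_pos hp hp') (add_pos hq hq'), hφ hp hq, hφ hp' hq',
      hf _ hp _ hp', hf _ hq _ hq', sub_add_sub_comm]
  · have h_eq : φ (x + 1 - 1) = f (x + 1) - f 1 := hφ (add_pos hx one_pos) one_pos
    rw [add_sub_cancel_right, hf x hx 1 one_pos, add_sub_cancel_right] at h_eq
    exact h_eq

theorem exists_eq_mul_of_additive_of_upperSemicontinuous {f : ℝ → ℝ}
    (hf : ∀ x > 0, ∀ y > 0, f (x + y) = f x + f y) {a : ℝ} (ha : 0 < a)
    (husc : ∀ v : ℕ → ℝ, (∀ k, 0 < v k) → Tendsto v atTop (𝓝 a) →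
      ∀ L, Tendsto (fun k ↦ f (v k)) atTop (𝓝 L) → L ≤ f a) :
    ∃ c, ∀ x > 0, f x = c * x := by
  obtain ⟨φ, hφ⟩ := exists_addMonoidHom_eq_of_pos hf
  have h_le (x : ℝ) : φ x ≤ φ a / a * x := by
    obtain ⟨q, hq_gt, hq⟩ : ∃ q : ℕ → ℚ, (∀ k, -(x / a) < q k) ∧
        Tendsto (fun k ↦ (q k : ℝ)) atTop (𝓝 (1 - x / a)) := by
      obtain ⟨q, -, hq_gt, hq⟩ := Real.exists_seq_rat_strictAnti_tendsto (1 - x / a)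
      exact ⟨q, fun k ↦ by linarith [hq_gt k], hq⟩
    have h_pos (k : ℕ) : 0 < q k * a + x := by
      have h_mul := mul_lt_mul_of_pos_right (hq_gt k) ha
      rw [neg_mul, div_mul_cancel₀ x ha.ne'] at h_mul
      linarith
    have h_tendsto : Tendsto (fun k ↦ q k * a + x) atTop (𝓝 a) := by
      have h_lim := (hq.mul_const a).add_const x
      rwa [sub_mul, one_mul, div_mul_cancel₀ x ha.ne', sub_add_cancel] at h_lim
    have h_apply (k : ℕ) : f (q k * a + x) = q k * φ a + φ x := by
      rw [← hφ _ (h_pos k), map_add, ← smul_eq_mul, map_ratCast_smul φ ℝ ℝ, smul_eq_mul]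
    have h_lim := husc _ h_pos h_tendsto ((1 - x / a) * φ a + φ x) <| by
      simpa only [h_apply] using (hq.mul_const (φ a)).add_const (φ x)
    rw [← hφ a ha] at h_lim
    linarith [show φ a / a * x = x / a * φ a by ring]
  refine ⟨φ a / a, fun x hx ↦ ?_⟩
  have h_neg := h_le (-x)
  rw [map_neg, mul_neg, neg_le_neg_iff] at h_neg
  rw [← hφ x hx]
  exact (h_le x).antisymm h_neg

/-! ### Hausdorff distance -/

section HausdorffDist

variable {X : Type*} [PseudoMetricSpace X]

lemma hausdorffDist_image_self_le {f : X → X} {s : Set X} {r : ℝ} (hr : 0 ≤ r)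
    (hf : ∀ x ∈ s, dist (f x) x ≤ r) : Metric.hausdorffDist (f '' s) s ≤ r :=
  Metric.hausdorffDist_le_of_mem_dist hr (Set.forall_mem_image.2 fun x hx ↦ ⟨x, hx, hf x hx⟩)
    fun x hx ↦ ⟨f x, Set.mem_image_of_mem f hx, by rw [dist_comm]; exact hf x hx⟩

lemma eventually_notMem_of_tendsto_hausdorffDist {α : Type*} {l : Filter α}
    {K : α → Set X} {K₀ : Set X} (hK₀ : IsClosed K₀) (hK₀_ne : K₀.Nonempty)
    (h_fin : ∀ a, Metric.hausdorffEDist (K a) K₀ ≠ ⊤)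
    (h_lim : Tendsto (fun a ↦ Metric.hausdorffDist (K a) K₀) l (𝓝 0)) {x : X} (hx : x ∉ K₀)
    {y : α → X} (hy : Tendsto y l (𝓝 x)) : ∀ᶠ a in l, y a ∉ K a := by
  have h_pos : 0 < Metric.infDist x K₀ := (hK₀.notMem_iff_infDist_pos hK₀_ne).1 hx
  have h_infDist := ((Metric.continuous_infDist_pt K₀).tendsto x).comp hy
  filter_upwards [h_lim.eventually_lt h_infDist h_pos] with a ha hya
  exact ha.not_ge (Metric.infDist_le_hausdorffDist_of_mem hya (h_fin a))

lemma exists_tendsto_of_tendsto_hausdorffDist {α : Type*} {l : Filter α}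
    {K : α → Set X} {K₀ : Set X} (hK : ∀ a, IsCompact (K a)) (hK_ne : ∀ a, (K a).Nonempty)
    (h_fin : ∀ a, Metric.hausdorffEDist (K a) K₀ ≠ ⊤)
    (h_lim : Tendsto (fun a ↦ Metric.hausdorffDist (K a) K₀) l (𝓝 0)) {x : X} (hx : x ∈ K₀) :
    ∃ y : α → X, (∀ a, y a ∈ K a) ∧ Tendsto y l (𝓝 x) := by
  choose y hyK hy using fun a ↦ (hK a).exists_infDist_eq_dist (hK_ne a) x
  refine ⟨y, hyK, tendsto_iff_dist_tendsto_zero.2 <|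
    squeeze_zero (fun _ ↦ dist_nonneg) (fun a ↦ ?_) h_lim⟩
  rw [dist_comm, ← hy, Metric.hausdorffDist_comm]
  exact Metric.infDist_le_hausdorffDist_of_mem hx (Metric.hausdorffEDist_comm.trans_ne (h_fin a))

end HausdorffDist

/-! ### Equiaffine invariant simple valuations -/

/-- Invariance of a functional on compact convex sets under the affine automorphisms of
determinant one. -/
def IsEquiaffineInvariant (F : Set E → ℝ) : Prop :=
  ∀ A : E ≃ᵃ[ℝ] E, LinearMap.det (A.linear : E →ₗ[ℝ] E) = 1 →
    ∀ K : Set E, IsCompact K → Convex ℝ K → F (A '' K) = F K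

/-- Upper semicontinuity of a functional on nonempty compact convex sets for the Hausdorff
distance. It is tested on sequences along which `F` converges, because the real `limsup` of an
unbounded sequence is a junk value. -/
def IsHausdorffUSC (F : Set E → ℝ) : Prop :=
  ∀ (K : ℕ → Set E) (K₀ : Set E), (∀ k, IsCompact (K k) ∧ Convex ℝ (K k) ∧ (K k).Nonempty) →
    IsCompact K₀ → Convex ℝ K₀ → K₀.Nonempty →
    Tendsto (fun k ↦ Metric.hausdorffDist (K k) K₀) atTop (𝓝 0) →
    ∀ L, Tendsto (fun k ↦ F (K k)) atTop (𝓝 L) → L ≤ F K₀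

section Characterization

variable {ι : Type*}

lemma coord_mem_Icc_of_mem_simplex {b : AffineBasis ι ℝ E} {x : E} (hx : x ∈ simplex b) (i : ι) :
    b.coord i x ∈ Set.Icc (0 : ℝ) 1 := by
  classical
  refine (simplex_subset_iff ((convex_Icc (0 : ℝ) 1).affine_preimage (b.coord i))).2
    (fun l ↦ ?_) hx
  rw [Set.mem_preimage, b.coord_apply]
  split_ifs <;> simp

lemma hausdorffDist_simplex_mapAffineBasis_slide_le (b : AffineBasis ι ℝ E) {i j : ι} (hij : i ≠ j)
    {v : ℝ} (hv : v ≠ 0) :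
    Metric.hausdorffDist (simplex (mapAffineBasis (slide b hij hv) b)) (simplex b) ≤
      |1 - v| * ‖b j - b i‖ := by
  rw [simplex_mapAffineBasis]
  refine hausdorffDist_image_self_le (by positivity) fun x hx ↦ ?_
  have h_coord := coord_mem_Icc_of_mem_simplex hx i
  rw [slide, affineDilatransvection_apply, dist_eq_norm, add_sub_cancel_left, norm_smul,
    AffineMap.coe_smul, Pi.smul_apply, norm_smul, Real.norm_eq_abs, Real.norm_eq_abs,
    abs_of_nonneg h_coord.1]
  gcongr
  exact mul_le_of_le_one_right (abs_nonneg _) h_coord.2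

variable [FiniteDimensional ℝ E] [MeasurableSpace E] [BorelSpace E] (μ : Measure E)
  [μ.IsAddHaarMeasure] [Nontrivial ι] {F : Set E → ℝ}

lemma IsEquiaffineInvariant.simplex_eq_of_measureReal_eq (hF : IsEquiaffineInvariant F)
    {b b' : AffineBasis ι ℝ E} (h : μ.real (simplex b) = μ.real (simplex b')) :
    F (simplex b) = F (simplex b') := by
  have : Finite ι := b.finite
  obtain ⟨A, hA⟩ := exists_image_simplex_eq b b'
  have h_abs : |LinearMap.det (A.linear : E →ₗ[ℝ] E)| = 1 := by
    rw [← hA, measureReal_image_affineEquiv] at h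
    exact (eq_div_of_mul_eq (measureReal_simplex_pos b μ).ne' h.symm).trans
      (div_self (measureReal_simplex_pos b μ).ne')
  rcases eq_or_eq_neg_of_abs_eq h_abs with h_det | h_det
  · rw [← hA, hF A h_det _ (isCompact_simplex b) (convex_simplex b)]
  · obtain ⟨i, j, hij⟩ := exists_pair_ne ι
    obtain ⟨S, hS_det, hS⟩ := exists_det_eq_neg_one_image_simplex_eq b hij
    have hSA : (S.trans A) '' simplex b = simplex b' := by
      rw [AffineEquiv.coe_trans, Set.image_comp, hS, hA]
    have hSA_det : LinearMap.det ((S.trans A).linear : E →ₗ[ℝ] E) = 1 := by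
      change LinearMap.det ((A.linear : E →ₗ[ℝ] E) ∘ₗ (S.linear : E →ₗ[ℝ] E)) = 1
      rw [LinearMap.det_comp, h_det, hS_det, neg_mul_neg, one_mul]
    rw [← hSA, hF _ hSA_det _ (isCompact_simplex b) (convex_simplex b)]

lemma exists_measureReal_simplex_eq (b : AffineBasis ι ℝ E) {x : ℝ} (hx : 0 < x) :
    ∃ b' : AffineBasis ι ℝ E, μ.real (simplex b') = x := by
  obtain ⟨i, j, hij⟩ := exists_pair_ne ι
  have hb := measureReal_simplex_pos b μ
  exact ⟨_, (measureReal_simplex_mapAffineBasis_slide b μ hij (div_pos hx hb)).trans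
    (div_mul_cancel₀ x hb.ne')⟩

lemma IsSimpleValuation.exists_additive_forall_simplex_eq (hF : IsSimpleValuation F)
    (hF_inv : IsEquiaffineInvariant F) (b₀ : AffineBasis ι ℝ E) :
    ∃ f : ℝ → ℝ, (∀ x > 0, ∀ y > 0, f (x + y) = f x + f y) ∧
      ∀ b : AffineBasis ι ℝ E, F (simplex b) = f (μ.real (simplex b)) := by
  have : Finite ι := b₀.finite
  obtain ⟨i, j, hij⟩ := exists_pair_ne ι
  let vol (b : AffineBasis ι ℝ E) : ℝ := μ.real (simplex b)
  have h_factors : Function.FactorsThrough (F ∘ simplex) vol :=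
    fun _ _ h ↦ hF_inv.simplex_eq_of_measureReal_eq μ h
  let f : ℝ → ℝ := Function.extend vol (F ∘ simplex) 0
  have hf (b : AffineBasis ι ℝ E) : F (simplex b) = f (μ.real (simplex b)) :=
    (h_factors.extend_apply 0 b).symm
  refine ⟨f, fun x hx y hy ↦ ?_, hf⟩
  have hxy : 0 < x + y := add_pos hx hy
  obtain ⟨b, hb⟩ := exists_measureReal_simplex_eq μ b₀ hxy
  have hv₁ : x / (x + y) < 1 := (div_lt_one hxy).2 (lt_add_of_pos_right x hy)
  have h_cut := hF.simplex_eq_add b hij (div_pos hx hxy) hv₁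
  rwa [hf, hf, hf, measureReal_simplex_mapAffineBasis_slide b μ hij (div_pos hx hxy),
    measureReal_simplex_mapAffineBasis_slide b μ hij.symm (sub_pos.2 hv₁), hb, sub_mul, one_mul,
    div_mul_cancel₀ x hxy.ne', add_sub_cancel_left] at h_cut

lemma IsSimpleValuation.exists_simplex_eq_mul (hF : IsSimpleValuation F)
    (hF_inv : IsEquiaffineInvariant F) (hF_usc : IsHausdorffUSC F) (b₀ : AffineBasis ι ℝ E) :
    ∃ c, ∀ b : AffineBasis ι ℝ E, F (simplex b) = c * μ.real (simplex b) := by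
  have : Finite ι := b₀.finite
  have h_vol := measureReal_simplex_pos b₀ μ
  obtain ⟨i, j, hij⟩ := exists_pair_ne ι
  obtain ⟨f, hf_add, hf⟩ := hF.exists_additive_forall_simplex_eq μ hF_inv b₀
  suffices h_usc : ∀ x : ℕ → ℝ, (∀ k, 0 < x k) → Tendsto x atTop (𝓝 (μ.real (simplex b₀))) →
      ∀ L, Tendsto (fun k ↦ f (x k)) atTop (𝓝 L) → L ≤ f (μ.real (simplex b₀)) by
    obtain ⟨c, hc⟩ := exists_eq_mul_of_additive_of_upperSemicontinuous hf_add h_vol h_usc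
    exact ⟨c, fun b ↦ (hf b).trans (hc _ (measureReal_simplex_pos b μ))⟩
  intro x hx_pos hx L hL
  have hv (k : ℕ) : 0 < x k / μ.real (simplex b₀) := div_pos (hx_pos k) h_vol
  have h_dist : Tendsto (fun k ↦ |1 - x k / μ.real (simplex b₀)| * ‖b₀ j - b₀ i‖) atTop (𝓝 0) := by
    have h_lim := ((hx.div_const (μ.real (simplex b₀))).const_sub 1).abs.mul_const ‖b₀ j - b₀ i‖
    rwa [div_self h_vol.ne', sub_self, abs_zero, zero_mul] at h_lim
  rw [← hf]
  refine hF_usc (fun k ↦ simplex (mapAffineBasis (slide b₀ hij (hv k).ne') b₀)) _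
    (fun k ↦ ⟨isCompact_simplex _, convex_simplex _, simplex_nonempty _⟩)
    (isCompact_simplex b₀) (convex_simplex b₀) (simplex_nonempty b₀)
    (squeeze_zero (fun _ ↦ Metric.hausdorffDist_nonneg)
      (fun k ↦ hausdorffDist_simplex_mapAffineBasis_slide_le b₀ hij (hv k).ne') h_dist) L ?_
  simpa only [hf, measureReal_simplex_mapAffineBasis_slide b₀ μ hij (hv _),
    div_mul_cancel₀ _ h_vol.ne'] using hL

end Characterization

theorem IsSimpleValuation.exists_eq_mul_measureReal [FiniteDimensional ℝ E] [MeasurableSpace E]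
    [BorelSpace E] (μ : Measure E) [μ.IsAddHaarMeasure] {F : Set E → ℝ} (hF : IsSimpleValuation F)
    (hF_inv : IsEquiaffineInvariant F) (hF_usc : IsHausdorffUSC F) :
    ∃ c, ∀ P, IsPolytope P → F P = c * μ.real P := by
  rcases subsingleton_or_nontrivial E with hE | hE
  · refine ⟨F Set.univ / μ.real Set.univ, fun P hP ↦ ?_⟩
    obtain ⟨s, hs, rfl⟩ := hP
    rw [((convexHull_nonempty_iff (𝕜 := ℝ)).2 (Finset.coe_nonempty.2 hs)).eq_univ,
      div_mul_cancel₀]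
    exact (ENNReal.toReal_pos (Measure.measure_pos_of_nonempty_interior μ (by simp)).ne'
      isCompact_univ.measure_lt_top.ne).ne'
  · have : Nontrivial (Fin (Module.finrank ℝ E + 1)) :=
      Fin.nontrivial_iff_two_le.2 (Nat.succ_le_succ Module.finrank_pos)
    obtain ⟨b₀⟩ := AffineBasis.exists_affineBasis_of_finiteDimensional
      (k := ℝ) (P := E) (Fintype.card_fin (Module.finrank ℝ E + 1))
    obtain ⟨c, hc⟩ := hF.exists_simplex_eq_mul μ hF_inv hF_usc b₀
    refine ⟨c, fun P hP ↦ sub_eq_zero.1 ?_⟩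
    exact (hF.sub ((isSimpleValuation_measureReal μ).const_mul c)).eq_zero_of_isPolytope
      (Nat.card_fin _) (fun b ↦ sub_eq_zero.2 (hc b)) hP

/-! ### Indicator functions of convex bodies -/

section Indicator

variable {X : Type*} {K : Set X} {x : X}

lemma eIndicator_of_mem (hx : x ∈ K) : eIndicator K x = 0 := if_pos hx

lemma eIndicator_of_notMem (hx : x ∉ K) : eIndicator K x = ⊤ := if_neg hx

lemma eIndicator_nonneg (K : Set X) (x : X) : 0 ≤ eIndicator K x := by
  unfold eIndicator
  split_ifs <;> simp

lemma eIndicator_preimage {Y : Type*} (f : X → Y) (K : Set Y) :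
    eIndicator (f ⁻¹' K) = fun x ↦ eIndicator K (f x) := rfl

lemma edom_eIndicator (K : Set X) : edom (eIndicator K) = K := by
  ext x
  by_cases hx : x ∈ K <;> simp [edom, eIndicator, hx]

lemma min_eIndicator (K K' : Set X) :
    (fun x ↦ min (eIndicator K x) (eIndicator K' x)) = eIndicator (K ∪ K') := by
  funext x
  by_cases hx : x ∈ K <;> by_cases hx' : x ∈ K' <;> simp [eIndicator, hx, hx']

lemma max_eIndicator (K K' : Set X) :
    (fun x ↦ max (eIndicator K x) (eIndicator K' x)) = eIndicator (K ∩ K') := by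
  funext x
  by_cases hx : x ∈ K <;> by_cases hx' : x ∈ K' <;> simp [eIndicator, hx, hx']

lemma lowerSemicontinuous_eIndicator [TopologicalSpace X] (hK : IsClosed K) :
    LowerSemicontinuous (eIndicator K) := by
  intro x a ha
  by_cases hx : x ∈ K
  · rw [eIndicator_of_mem hx] at ha
    exact Eventually.of_forall fun y ↦ ha.trans_le (eIndicator_nonneg K y)
  · filter_upwards [hK.isOpen_compl.mem_nhds hx] with y hy
    rwa [eIndicator_of_notMem hy, ← eIndicator_of_notMem hx]

lemma lipBound_eIndicator [NormedAddCommGroup X] (K : Set X) {L : ℝ} (hL : 0 ≤ L) :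
    LipBound (eIndicator K) L := by
  intro x hx y hy
  rw [edom_eIndicator] at hx hy
  rw [eIndicator_of_mem (interior_subset hx), eIndicator_of_mem (interior_subset hy), sub_self,
    abs_zero]
  positivity

end Indicator

section IsLC

variable {K : Set E}

lemma eIndicator_convexComb_le (hK : Convex ℝ K) (x y : E) {t : ℝ} (ht₀ : 0 < t) (ht₁ : t < 1) :
    eIndicator K (t • x + (1 - t) • y) ≤
      (t : EReal) * eIndicator K x + ((1 - t : ℝ) : EReal) * eIndicator K y := by
  have ht₁' : 0 < 1 - t := sub_pos.2 ht₁
  have h_nonneg {s : ℝ} (hs : 0 < s) (z : E) : 0 ≤ (s : EReal) * eIndicator K z :=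
    mul_nonneg (EReal.coe_nonneg.2 hs.le) (eIndicator_nonneg K z)
  by_cases hx : x ∈ K
  · by_cases hy : y ∈ K
    · rw [eIndicator_of_mem (hK hx hy ht₀.le ht₁'.le (add_sub_cancel t 1))]
      exact add_nonneg (h_nonneg ht₀ x) (h_nonneg ht₁' y)
    · rw [eIndicator_of_notMem hy, EReal.coe_mul_top_of_pos ht₁', EReal.add_top_of_ne_bot]
      · exact le_top
      · exact ne_bot_of_le_ne_bot EReal.zero_ne_bot (h_nonneg ht₀ x)
  · rw [eIndicator_of_notMem hx, EReal.coe_mul_top_of_pos ht₀, EReal.top_add_of_ne_bot]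
    · exact le_top
    · exact ne_bot_of_le_ne_bot EReal.zero_ne_bot (h_nonneg ht₁' y)

lemma isLC_eIndicator_s8 (hK : IsCompact K) (hKc : Convex ℝ K) (hK_ne : K.Nonempty) :
    IsLC (eIndicator K) := by
  refine ⟨fun x y t ↦ eIndicator_convexComb_le hKc x y, lowerSemicontinuous_eIndicator hK.isClosed,
    fun x ↦ ne_bot_of_le_ne_bot EReal.zero_ne_bot (eIndicator_nonneg K x), ?_,
    by rwa [edom_eIndicator], 1, one_pos, lipBound_eIndicator K zero_le_one⟩
  obtain ⟨x, hx⟩ := hK_ne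
  exact ⟨x, by simp [eIndicator_of_mem hx]⟩

lemma tauConv_eIndicator {K : ℕ → Set E} {K₀ : Set E}
    (hK : ∀ k, IsCompact (K k) ∧ Convex ℝ (K k) ∧ (K k).Nonempty) (hK₀ : IsCompact K₀)
    (hK₀c : Convex ℝ K₀) (hK₀_ne : K₀.Nonempty)
    (h_lim : Tendsto (fun k ↦ Metric.hausdorffDist (K k) K₀) atTop (𝓝 0)) :
    TauConv (fun k ↦ eIndicator (K k)) (eIndicator K₀) := by
  have h_fin (k : ℕ) : Metric.hausdorffEDist (K k) K₀ ≠ ⊤ :=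
    Metric.hausdorffEDist_ne_top_of_nonempty_of_bounded (hK k).2.2 hK₀_ne (hK k).1.isBounded
      hK₀.isBounded
  have h_top {x : E} (hx : x ∉ K₀) {y : ℕ → E} (hy : Tendsto y atTop (𝓝 x)) :
      Tendsto (fun k ↦ eIndicator (K k) (y k)) atTop (𝓝 (eIndicator K₀ x)) := by
    rw [eIndicator_of_notMem hx]
    refine tendsto_const_nhds.congr' ?_
    exact (eventually_notMem_of_tendsto_hausdorffDist hK₀.isClosed hK₀_ne h_fin h_lim hx hy).mono
      fun k hk ↦ (eIndicator_of_notMem hk).symm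
  refine ⟨fun k ↦ isLC_eIndicator_s8 (hK k).1 (hK k).2.1 (hK k).2.2,
    isLC_eIndicator_s8 hK₀ hK₀c hK₀_ne, fun x y hy ↦ ?_, fun x ↦ ?_, 1, one_pos,
    fun k ↦ lipBound_eIndicator (K k) zero_le_one⟩
  · by_cases hx : x ∈ K₀
    · rw [eIndicator_of_mem hx]
      exact le_liminf_of_le (by isBoundedDefault)
        (Eventually.of_forall fun k ↦ eIndicator_nonneg (K k) (y k))
    · exact (h_top hx hy).liminf_eq.ge
  · by_cases hx : x ∈ K₀
    · obtain ⟨y, hyK, hy⟩ := exists_tendsto_of_tendsto_hausdorffDist (fun k ↦ (hK k).1)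
        (fun k ↦ (hK k).2.2) h_fin h_lim hx
      refine ⟨y, hy, ?_⟩
      simp only [eIndicator_of_mem hx, eIndicator_of_mem (hyK _), tendsto_const_nhds]
    · exact ⟨fun _ ↦ x, tendsto_const_nhds, h_top hx tendsto_const_nhds⟩

end IsLC

open Classical in
/-- The functional on convex bodies induced by a functional on `LC`. The empty set needs the
convention `0` because its indicator function is not proper. -/
def bodyFunctional {X : Type*} (Z : (X → EReal) → ℝ) (K : Set X) : ℝ :=
  if K.Nonempty then Z (eIndicator K) else 0

lemma bodyFunctional_of_nonempty {X : Type*} {Z : (X → EReal) → ℝ} {K : Set X} (hK : K.Nonempty) :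
    bodyFunctional Z K = Z (eIndicator K) :=
  if_pos hK

lemma bodyFunctional_empty {X : Type*} {Z : (X → EReal) → ℝ} : bodyFunctional Z ∅ = 0 :=
  if_neg Set.not_nonempty_empty

section BodyFunctional

variable {Z : (E → EReal) → ℝ}

lemma TauUSC.isHausdorffUSC_bodyFunctional (hZ : TauUSC Z) : IsHausdorffUSC (bodyFunctional Z) := by
  intro K K₀ hK hK₀ hK₀c hK₀_ne h_lim L hL
  simp only [bodyFunctional_of_nonempty (hK _).2.2] at hL
  rw [bodyFunctional_of_nonempty hK₀_ne, ← hL.limsup_eq]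
  exact hZ _ _ (tauConv_eIndicator hK hK₀ hK₀c hK₀_ne h_lim)

variable [FiniteDimensional ℝ E]

lemma IsVal.isSimpleValuation_bodyFunctional (hZ : IsVal Z)
    (hZ₀ : ∀ u : E → EReal, IsLC u → interior (edom u) = ∅ → Z u = 0) :
    IsSimpleValuation (bodyFunctional Z) := by
  have h_zero {K : Set E} (hK : IsCompact K) (hKc : Convex ℝ K) (hK₀ : interior K = ∅) :
      bodyFunctional Z K = 0 := by
    rcases K.eq_empty_or_nonempty with rfl | hK_ne
    · exact bodyFunctional_empty
    · rw [bodyFunctional_of_nonempty hK_ne]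
      exact hZ₀ _ (isLC_eIndicator_s8 hK hKc hK_ne) (by rwa [edom_eIndicator])
  refine ⟨fun {K} hK hKc h hh ↦ ?_, h_zero⟩
  have h_union := inter_halfspace_union_inter_halfspace_neg K h
  rcases (K ∩ halfspace h).eq_empty_or_nonempty with h_empty | h_pos
  · rw [h_empty, Set.empty_union] at h_union
    rw [h_empty, h_union, bodyFunctional_empty, zero_add]
  rcases (K ∩ halfspace (-h)).eq_empty_or_nonempty with h_empty | h_neg
  · rw [h_empty, Set.union_empty] at h_union
    rw [h_empty, h_union, bodyFunctional_empty, add_zero]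
  have hK_zero : bodyFunctional Z (K ∩ h ⁻¹' {0}) = 0 :=
    h_zero (hK.inter_right (isClosed_singleton.preimage h.continuous_of_finiteDimensional))
      (hKc.inter ((convex_singleton 0).affine_preimage h)) <| Set.subset_empty_iff.1 <|
      (interior_mono Set.inter_subset_right).trans (interior_affineMap_preimage_zero hh).subset
  have h_val := hZ (eIndicator (K ∩ halfspace h)) (eIndicator (K ∩ halfspace (-h)))
    (isLC_eIndicator_s8 (hK.inter_right (isClosed_halfspace h)) (hKc.inter (convex_halfspace h)) h_pos)
    (isLC_eIndicator_s8 (hK.inter_right (isClosed_halfspace _)) (hKc.inter (convex_halfspace _)) h_neg)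
  rw [min_eIndicator, max_eIndicator, h_union, inter_halfspace_inter_inter_halfspace_neg,
    ← bodyFunctional_of_nonempty (Z := Z) (inter_preimage_zero_nonempty hKc h_pos h_neg), hK_zero,
    add_zero] at h_val
  have hK_ne := h_pos.mono Set.inter_subset_left
  rw [bodyFunctional_of_nonempty h_pos, bodyFunctional_of_nonempty h_neg,
    bodyFunctional_of_nonempty hK_ne, h_val (isLC_eIndicator_s8 hK hKc hK_ne)]

lemma isEquiaffineInvariant_bodyFunctional (hsl : SLInv Z) (htrans : TransInv Z) :
    IsEquiaffineInvariant (bodyFunctional Z) := by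
  intro A hA K hK hKc
  rcases K.eq_empty_or_nonempty with rfl | hK_ne
  · rw [Set.image_empty]
  have hA_symm_det : LinearMap.det (A.linear.symm : E →ₗ[ℝ] E) = 1 := by
    have h_det := A.linear.det_mul_det_symm
    rwa [hA, one_mul] at h_det
  have hA_symm (x : E) : A.symm x = A.linear.symm (x - A 0) := by
    rw [AffineEquiv.symm_apply_eq, ← add_zero (A.linear.symm _), ← vadd_eq_add, A.map_vadd,
      LinearEquiv.apply_symm_apply, vadd_eq_add, sub_add_cancel]
  have h_image : A '' K = A.symm ⁻¹' K := A.toEquiv.image_eq_preimage_symm K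
  have h_lin : A.linear.symm ⁻¹' K = A.linear '' K := (A.linear.image_eq_preimage_symm K).symm
  have h_lc : IsLC (eIndicator (A.linear.symm ⁻¹' K)) := by
    rw [h_lin]
    exact isLC_eIndicator_s8
      (hK.image (LinearMap.continuous_of_finiteDimensional (A.linear : E →ₗ[ℝ] E)))
      (hKc.linear_image (A.linear : E →ₗ[ℝ] E)) (hK_ne.image _)
  rw [bodyFunctional_of_nonempty hK_ne, bodyFunctional_of_nonempty (hK_ne.image A)]
  calc Z (eIndicator (A '' K)) = Z fun x ↦ eIndicator (A.linear.symm ⁻¹' K) (x - A 0) := by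
        rw [h_image, eIndicator_preimage, eIndicator_preimage]
        simp only [hA_symm]
    _ = Z fun x ↦ eIndicator K (A.linear.symm x) := htrans _ h_lc (A 0)
    _ = Z (eIndicator K) := hsl _ (isLC_eIndicator_s8 hK hKc hK_ne) _ hA_symm_det

end BodyFunctional

theorem stmt8_general [FiniteDimensional ℝ E] [MeasurableSpace E] [BorelSpace E] (μ : Measure E)
    [μ.IsAddHaarMeasure] {Z : (E → EReal) → ℝ} (hval : IsVal Z)
    (hsimple : ∀ u : E → EReal, IsLC u → interior (edom u) = ∅ → Z u = 0) (husc : TauUSC Z)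
    (hsl : SLInv Z) (htrans : TransInv Z) :
    ∃ c₁ : ℝ, ∀ P : Set E, IsPolytope P → Z (eIndicator P) = c₁ * (μ P).toReal := by
  obtain ⟨c, hc⟩ := (hval.isSimpleValuation_bodyFunctional hsimple).exists_eq_mul_measureReal μ
    (isEquiaffineInvariant_bodyFunctional hsl htrans) husc.isHausdorffUSC_bodyFunctional
  refine ⟨c, fun P hP ↦ ?_⟩
  rw [← measureReal_def, ← hc P hP, bodyFunctional_of_nonempty]
  obtain ⟨s, hs, rfl⟩ := hP
  exact convexHull_nonempty_iff.2 (Finset.coe_nonempty.2 hs)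

/-- If `Z : LC(ℝⁿ) → ℝ` is a simple, τ-upper semicontinuous, `SL_n(ℝ)`,
translation and dually epi-translation invariant valuation, then there is a constant `c₁`
with `Z(I_P) = c₁ ⬝ V_n(P)` for every polytope `P ⊂ ℝⁿ`. -/
theorem stmt8 (n : ℕ) (Z : (EuclideanSpace ℝ (Fin n) → EReal) → ℝ)
    (hval : IsVal Z)
    (hsimple : ∀ u : EuclideanSpace ℝ (Fin n) → EReal, IsLC u →
      interior (edom u) = ∅ → Z u = 0)
    (husc : TauUSC Z) (hsl : SLInv Z) (htrans : TransInv Z) (hdual : DualTransInv Z) :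
    ∃ c₁ : ℝ, ∀ P : Set (EuclideanSpace ℝ (Fin n)), IsPolytope P →
      Z (eIndicator P) = c₁ * (volume P).toReal :=
  stmt8_general volume hval hsimple husc hsl htrans

end
end
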